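/- arXiv:1302.1678 — 4 statements merged into one kernel-verified Lean document; each statement's English description precedes it below -/
import Mathlib

section
/- (Theorem 3 of the paper, asymptotic part.) Let m ≥ 1, d = 2m, let J ∈ ℝ^{d×d} be skew-symmetric, let H : ℝ^d → ℝ be C^∞, let s ≥ 1, k ≥ s, and let (c_ℓ, b_ℓ)_{ℓ=1}^k be a quadrature on [0,1] exact for polynomials of degree ≤ 2k−1. Suppose that for each h ∈ (0, h₀] there are reals η̂₀(h), …, η̂_{s−1}(h), bounded uniformly in h, and a polynomial map u_h : [0,h] → ℝ^d of degree ≤ s with u_h(0) = y₀, whose range lies in a fixed compact set, satisfying u_h'(ch) = Σ_{j=0}^{s−1} P_j(c) η̂_j(h) γ̂_j(h) for c ∈ [0,1], where γ̂_j(h) = Σ_{ℓ=1}^k b_ℓ P_j(c_ℓ) J ∇H(u_h(c_ℓ h)). Then H(u_h(h)) − H(y₀) is O(h^{2k+1}) as h → 0⁺. -/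
open MeasureTheory Polynomial Matrix

/-- The shifted Legendre polynomial `P j`, orthonormal on `[0,1]`. -/
noncomputable def legP (j : ℕ) : ℝ → ℝ := fun x =>
  (Real.sqrt (2 * j + 1) / (Nat.factorial j)) *
    (Polynomial.derivative^[j] ((Polynomial.X ^ 2 - Polynomial.X) ^ j)).eval x

noncomputable def legPoly (j : ℕ) : Polynomial ℝ :=
  Polynomial.C (Real.sqrt (2 * j + 1) / (Nat.factorial j)) *
    (Polynomial.derivative^[j] ((Polynomial.X ^ 2 - Polynomial.X) ^ j))

lemma legP_eq (j : ℕ) (x : ℝ) : legP j x = (legPoly j).eval x := by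
  simp [legP, legPoly]

lemma legPoly_natDegree (j : ℕ) : (legPoly j).natDegree ≤ j := by
  unfold legPoly
  refine (natDegree_C_mul_le _ _).trans ((natDegree_iterate_derivative _ _).trans ?_)
  have h1 : ((X ^ 2 - X : ℝ[X]) ^ j).natDegree ≤ j * 2 := by
    refine natDegree_pow_le_of_le j ?_
    compute_degree
  omega

lemma rod_vanish (j l : ℕ) (hl : l < j) (a : ℝ) (ha : a ^ 2 - a = 0) :
    (derivative^[l] ((X ^ 2 - X : ℝ[X]) ^ j)).eval a = 0 := by
  have h1 : (X - C a) ^ j ∣ ((X ^ 2 - X : ℝ[X]) ^ j) := by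
    apply pow_dvd_pow_of_dvd
    rw [dvd_iff_isRoot]
    simpa [IsRoot] using ha
  have h2 := pow_sub_dvd_iterate_derivative_of_pow_dvd l h1
  have h3 : (X - C a) ∣ derivative^[l] ((X ^ 2 - X : ℝ[X]) ^ j) :=
    (dvd_pow_self _ (by omega)).trans h2
  rw [dvd_iff_isRoot] at h3
  exact h3

lemma rod_orth (j : ℕ) : ∀ r ≤ j, ∀ q : ℝ[X], q.degree < r →
    ∫ x in (0:ℝ)..1, (derivative^[r] ((X ^ 2 - X : ℝ[X]) ^ j)).eval x * q.eval x = 0 := by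
  intro r
  induction r with
  | zero =>
    intro _ q hq
    have : q = 0 := by
      rw [← degree_eq_bot]
      exact (WithBot.lt_coe_bot).1 hq
    simp [this]
  | succ r ih =>
    intro hr q hq
    have hq' : (derivative q).degree < r := by
      by_cases h0 : derivative q = 0
      · rw [h0, degree_zero]; exact WithBot.bot_lt_coe _
      · have hq0 : q ≠ 0 := by rintro rfl; simp at h0
        have h1 := degree_derivative_lt hq0
        refine h1.trans_le ?_
        rw [degree_eq_natDegree hq0] at hq ⊢
        norm_cast at hq ⊢
        omega
    have h2 := ih (by omega) _ hq'
    have := intervalIntegral.integral_deriv_mul_eq_sub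
      (u := fun x => (derivative^[r] ((X ^ 2 - X : ℝ[X]) ^ j)).eval x)
      (u' := fun x => (derivative^[r+1] ((X ^ 2 - X : ℝ[X]) ^ j)).eval x)
      (v := fun x => q.eval x) (v' := fun x => (derivative q).eval x) (a := 0) (b := 1)
      (fun x _ => by
        rw [Function.iterate_succ_apply']; exact Polynomial.hasDerivAt _ x)
      (fun x _ => Polynomial.hasDerivAt _ x)
      ((Polynomial.continuous _).intervalIntegrable _ _)
      ((Polynomial.continuous _).intervalIntegrable _ _)
    rw [rod_vanish j r (by omega) 0 (by simp), rod_vanish j r (by omega) 1 (by simp),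
      intervalIntegral.integral_add
        (Continuous.intervalIntegrable (by fun_prop) _ _)
        (Continuous.intervalIntegrable (by fun_prop) _ _),
      h2] at this
    simpa using this

lemma legPoly_orth (j i : ℕ) (hi : i < j) :
    ∫ x in (0:ℝ)..1, (legPoly j * X ^ i).eval x = 0 := by
  have := rod_orth j j le_rfl (X ^ i) (by
    rw [degree_X_pow]; exact_mod_cast hi)
  simp only [legPoly, eval_mul, eval_C, mul_assoc, intervalIntegral.integral_const_mul, this,
    mul_zero]

lemma taylor_approx {E : Type*} [NormedAddCommGroup E] [NormedSpace ℝ E] (f : ℝ → E)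
    (hf : ContDiff ℝ (⊤ : ℕ∞) f) (p : ℕ) (M : ℝ) (hM : 0 ≤ M)
    (hb : ∀ x ∈ Set.Icc (0:ℝ) 1, ‖iteratedDeriv p f x‖ ≤ M) :
    ∃ a : ℕ → E, ∀ x ∈ Set.Icc (0:ℝ) 1, ‖f x - ∑ i ∈ Finset.range p, x ^ i • a i‖ ≤ M := by
  cases p with
  | zero => exact ⟨0, by simpa using hb⟩
  | succ n =>
    refine ⟨fun i => ((i.factorial : ℝ))⁻¹ • iteratedDerivWithin i f (Set.Icc 0 1) 0, ?_⟩
    intro x hx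
    have := taylor_mean_remainder_bound (f := f) (a := 0) (b := 1) (C := M) (x := x) (n := n)
      zero_le_one (hf.contDiffOn.of_le (by exact_mod_cast le_top)) hx (by
        intro y hy
        rw [iteratedDerivWithin_eq_iteratedDeriv (uniqueDiffOn_Icc zero_lt_one)
          (hf.contDiffAt.of_le (by exact_mod_cast le_top)) hy]
        exact hb y hy)
    rw [taylor_within_apply] at this
    refine (le_trans (le_of_eq ?_) this).trans ?_
    · congr 2
      refine Finset.sum_congr rfl fun i _ => ?_
      rw [smul_smul, sub_zero, mul_comm]
    · rw [sub_zero]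
      have h1 : x ^ (n+1) ≤ 1 := pow_le_one₀ hx.1 hx.2
      have h2 : (1:ℝ) ≤ (n.factorial : ℝ) := by exact_mod_cast n.factorial_pos
      rw [div_le_iff₀ (by positivity)]
      have : M * x ^ (n+1) ≤ M * 1 := by gcongr
      nlinarith

section core
variable {E : Type*} [NormedAddCommGroup E] [NormedSpace ℝ E]

lemma legP_bound (j : ℕ) : ∃ A : ℝ, 0 ≤ A ∧ ∀ x ∈ Set.Icc (0:ℝ) 1, |legP j x| ≤ A := by
  obtain ⟨A, hA⟩ := (isCompact_Icc (a := (0:ℝ)) (b := 1)).exists_bound_of_continuousOn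
    (f := legP j) (by
      have : legP j = fun x => (legPoly j).eval x := funext (legP_eq j)
      rw [this]; exact (Polynomial.continuous _).continuousOn)
  exact ⟨|A|, abs_nonneg _, fun x hx => (hA x hx).trans (le_abs_self _)⟩

lemma quad_monomial {k : ℕ} (c b : Fin k → ℝ)
    (hquad : ∀ q : Polynomial ℝ, q.natDegree ≤ 2 * k - 1 →
      ∑ ℓ, b ℓ * q.eval (c ℓ) = ∫ x in (0:ℝ)..1, q.eval x) (j i : ℕ) (hij : j + i < 2 * k) :
    ∑ ℓ, b ℓ * (legP j (c ℓ) * c ℓ ^ i) = ∫ x in (0:ℝ)..1, legP j x * x ^ i := by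
  have := hquad (legPoly j * X ^ i) (by
    refine natDegree_mul_le.trans ?_
    have := legPoly_natDegree j
    rw [natDegree_X_pow]; omega)
  simpa [legP_eq] using this

lemma gauss_small {k : ℕ} (c b : Fin k → ℝ) (hc : ∀ ℓ, c ℓ ∈ Set.Icc (0:ℝ) 1)
    (hquad : ∀ q : Polynomial ℝ, q.natDegree ≤ 2 * k - 1 →
      ∑ ℓ, b ℓ * q.eval (c ℓ) = ∫ x in (0:ℝ)..1, q.eval x)
    (j p : ℕ) (hpj : p ≤ j) (hjk : j < k) :
    ∃ A : ℝ, 0 ≤ A ∧ ∀ f : ℝ → E, ContDiff ℝ (⊤ : ℕ∞) f → ∀ M : ℝ, 0 ≤ M →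
      (∀ x ∈ Set.Icc (0:ℝ) 1, ‖iteratedDeriv p f x‖ ≤ M) →
      ‖∑ ℓ, (b ℓ * legP j (c ℓ)) • f (c ℓ)‖ ≤ A * M := by
  refine ⟨∑ ℓ, |b ℓ * legP j (c ℓ)|, by positivity, fun f hf M hM hb => ?_⟩
  obtain ⟨a, ha⟩ := taylor_approx f hf p M hM hb
  have hz : ∑ ℓ, (b ℓ * legP j (c ℓ)) • ∑ i ∈ Finset.range p, c ℓ ^ i • a i = 0 := by
    simp_rw [Finset.smul_sum, smul_smul]
    rw [Finset.sum_comm]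
    refine Finset.sum_eq_zero fun i hi => ?_
    rw [← Finset.sum_smul]
    have hi' := Finset.mem_range.1 hi
    have h1 := quad_monomial c b hquad j i (by omega)
    have h2 := legPoly_orth j i (by omega)
    simp only [eval_mul, eval_pow, eval_X, ← legP_eq] at h2
    simp_rw [mul_assoc]
    rw [h1, h2, zero_smul]
  have he : ∑ ℓ, (b ℓ * legP j (c ℓ)) • f (c ℓ) =
      ∑ ℓ, (b ℓ * legP j (c ℓ)) • (f (c ℓ) - ∑ i ∈ Finset.range p, c ℓ ^ i • a i) := by
    simp_rw [smul_sub]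
    rw [Finset.sum_sub_distrib, hz, sub_zero]
  rw [he, Finset.sum_mul]
  refine norm_sum_le_of_le _ fun ℓ _ => ?_
  rw [norm_smul, Real.norm_eq_abs]
  exact mul_le_mul_of_nonneg_left (ha _ (hc ℓ)) (abs_nonneg _)

lemma gauss_err {E : Type*} [NormedAddCommGroup E] [InnerProductSpace ℝ E]
    {k : ℕ} (c b : Fin k → ℝ) (hc : ∀ ℓ, c ℓ ∈ Set.Icc (0:ℝ) 1)
    (hquad : ∀ q : Polynomial ℝ, q.natDegree ≤ 2 * k - 1 →
      ∑ ℓ, b ℓ * q.eval (c ℓ) = ∫ x in (0:ℝ)..1, q.eval x)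
    (j p : ℕ) (hp : j + p ≤ 2 * k) :
    ∃ A : ℝ, 0 ≤ A ∧ ∀ f : ℝ → E, ContDiff ℝ (⊤ : ℕ∞) f → ∀ M : ℝ, 0 ≤ M →
      (∀ x ∈ Set.Icc (0:ℝ) 1, ‖iteratedDeriv p f x‖ ≤ M) → ∀ w : E,
      |(∫ x in (0:ℝ)..1, legP j x * inner ℝ (f x) w) -
        ∑ ℓ, b ℓ * (legP j (c ℓ) * inner ℝ (f (c ℓ)) w)| ≤ A * (M * ‖w‖) := by
  obtain ⟨B, hB0, hB⟩ := legP_bound j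
  refine ⟨B + ∑ ℓ, |b ℓ * legP j (c ℓ)|, by positivity, fun f hf M hM hb w => ?_⟩
  obtain ⟨a, ha⟩ := taylor_approx f hf p M hM hb
  have hPc : Continuous (legP j) := by
    have : legP j = fun x => (legPoly j).eval x := funext (legP_eq j)
    rw [this]; exact Polynomial.continuous _
  have hfc : Continuous f := hf.continuous
  set q : ℝ → ℝ := fun x => ∑ i ∈ Finset.range p, x ^ i * inner ℝ (a i) w with hq
  have hqc : Continuous q := by fun_prop
  set r : ℝ → ℝ := fun x => inner ℝ (f x) w - q x with hr
  have hrc : Continuous r := by fun_prop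
  have hrb : ∀ x ∈ Set.Icc (0:ℝ) 1, |r x| ≤ M * ‖w‖ := by
    intro x hx
    have : r x = inner ℝ (f x - ∑ i ∈ Finset.range p, x ^ i • a i) w := by
      simp only [hr, hq, inner_sub_left, sum_inner, real_inner_smul_left]
    rw [this]
    exact (abs_real_inner_le_norm _ _).trans
      (mul_le_mul_of_nonneg_right (ha x hx) (norm_nonneg _))
  have hfq : ∀ x, (inner ℝ (f x) w : ℝ) = q x + r x := fun x => by simp [hr]
  have hqe : ∑ ℓ, b ℓ * (legP j (c ℓ) * q (c ℓ)) = ∫ x in (0:ℝ)..1, legP j x * q x := by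
    simp only [hq, Finset.mul_sum]
    rw [Finset.sum_comm, intervalIntegral.integral_finsetSum
      (fun i _ => Continuous.intervalIntegrable (by fun_prop) _ _)]
    refine Finset.sum_congr rfl fun i hi => ?_
    have hi' := Finset.mem_range.1 hi
    simp_rw [← mul_assoc]
    rw [intervalIntegral.integral_mul_const, ← quad_monomial c b hquad j i (by omega),
      Finset.sum_mul]
    refine Finset.sum_congr rfl fun ℓ _ => by ring
  have he : (∫ x in (0:ℝ)..1, legP j x * inner ℝ (f x) w) -
        ∑ ℓ, b ℓ * (legP j (c ℓ) * inner ℝ (f (c ℓ)) w) =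
      (∫ x in (0:ℝ)..1, legP j x * r x) - ∑ ℓ, b ℓ * (legP j (c ℓ) * r (c ℓ)) := by
    simp_rw [hfq, mul_add]
    rw [intervalIntegral.integral_add (Continuous.intervalIntegrable (by fun_prop) _ _)
      (Continuous.intervalIntegrable (by fun_prop) _ _), Finset.sum_add_distrib, hqe]
    ring
  rw [he]
  have hI : |∫ x in (0:ℝ)..1, legP j x * r x| ≤ B * (M * ‖w‖) := by
    have := intervalIntegral.norm_integral_le_of_norm_le_const (a := (0:ℝ)) (b := 1)
      (f := fun x => legP j x * r x) (C := B * (M * ‖w‖)) (by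
        intro x hx
        rw [Set.uIoc_of_le zero_le_one] at hx
        have hx' : x ∈ Set.Icc (0:ℝ) 1 := ⟨hx.1.le, hx.2⟩
        rw [norm_mul]
        exact mul_le_mul (hB x hx') (hrb x hx') (norm_nonneg _) hB0)
    simpa using this
  have hS : |∑ ℓ, b ℓ * (legP j (c ℓ) * r (c ℓ))| ≤
      (∑ ℓ, |b ℓ * legP j (c ℓ)|) * (M * ‖w‖) := by
    rw [Finset.sum_mul]
    refine (Finset.abs_sum_le_sum_abs _ _).trans (Finset.sum_le_sum fun ℓ _ => ?_)
    rw [← mul_assoc, abs_mul]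
    exact mul_le_mul_of_nonneg_left (hrb _ (hc ℓ)) (abs_nonneg _)
  refine (abs_sub _ _).trans ?_
  rw [add_mul]
  exact add_le_add hI hS

lemma iterDeriv_formula (s : ℕ) (v : ℝ → E) (w : ℕ → E) (h : ℝ)
    (hv : ∀ x, HasDerivAt v (h • ∑ j ∈ Finset.range s, legP j x • w j) x) (i : ℕ) :
    iteratedDeriv (i + 1) v = fun x => h • ∑ j ∈ Finset.range s,
      (derivative^[i] (legPoly j)).eval x • w j := by
  induction i with
  | zero =>
    simp only [zero_add, iteratedDeriv_one, Function.iterate_zero, id]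
    funext x
    rw [(hv x).deriv]
    simp_rw [legP_eq]
  | succ i ih =>
    rw [iteratedDeriv_succ, ih]
    funext x
    refine HasDerivAt.deriv ?_
    refine HasDerivAt.const_smul h ?_
    refine HasDerivAt.fun_sum fun j _ => ?_
    rw [Function.iterate_succ_apply']
    exact (Polynomial.hasDerivAt _ x).smul_const _

lemma v_smooth (s : ℕ) (v : ℝ → E) (w : ℕ → E) (h : ℝ)
    (hv : ∀ x, HasDerivAt v (h • ∑ j ∈ Finset.range s, legP j x • w j) x) :
    ContDiff ℝ (⊤ : ℕ∞) v := by
  rw [contDiff_infty_iff_deriv]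
  refine ⟨fun x => (hv x).differentiableAt, ?_⟩
  have : deriv v = fun x => h • ∑ j ∈ Finset.range s, (legPoly j).eval x • w j := by
    funext x; rw [(hv x).deriv]; simp_rw [legP_eq]
  rw [this]
  have (j : ℕ) : ContDiff ℝ (⊤ : ℕ∞) (fun x => (legPoly j).eval x) := by
    simpa using (legPoly j).contDiff_aeval (𝕜 := ℝ) (⊤ : ℕ∞)
  fun_prop

lemma comp_bound (s : ℕ) (h₀ : ℝ) (G : E → E) (hG : ContDiff ℝ (⊤ : ℕ∞) G)
    (K : Set E) (hK : IsCompact K) (V : ℝ → ℝ → E) (w : ℕ → ℝ → E)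
    (hV : ∀ h ∈ Set.Ioc (0:ℝ) h₀, ∀ x,
      HasDerivAt (V h) (h • ∑ j ∈ Finset.range s, legP j x • w j h) x)
    (hVK : ∀ h ∈ Set.Ioc (0:ℝ) h₀, ∀ x ∈ Set.Icc (0:ℝ) 1, V h x ∈ K)
    (p : ℕ)
    (hw : ∀ i < p, ∀ j < s, i ≤ j → ∃ C : ℝ, 0 ≤ C ∧ ∀ h ∈ Set.Ioc (0:ℝ) h₀,
      ‖w j h‖ ≤ C * h ^ i) :
    ∃ C : ℝ, 0 ≤ C ∧ ∀ h ∈ Set.Ioc (0:ℝ) h₀, ∀ x ∈ Set.Icc (0:ℝ) 1,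
      ‖iteratedDeriv p (G ∘ V h) x‖ ≤ C * h ^ p := by
  -- bounds of the derivatives of V
  have h1 : ∀ i : ℕ, ∃ D : ℝ, 0 ≤ D ∧ (1 ≤ i → i ≤ p → ∀ h ∈ Set.Ioc (0:ℝ) h₀,
      ∀ x ∈ Set.Icc (0:ℝ) 1, ‖iteratedDeriv i (V h) x‖ ≤ D * h ^ i) := by
    intro i
    by_cases hi : 1 ≤ i ∧ i ≤ p
    swap
    · exact ⟨0, le_rfl, fun a b => absurd ⟨a, b⟩ hi⟩
    obtain ⟨i, rfl⟩ : ∃ n, i = n + 1 := ⟨i - 1, by omega⟩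
    have h2 : ∀ j : ℕ, ∃ D : ℝ, 0 ≤ D ∧ (j < s → ∀ h ∈ Set.Ioc (0:ℝ) h₀,
        ∀ x ∈ Set.Icc (0:ℝ) 1, ‖(derivative^[i] (legPoly j)).eval x • w j h‖ ≤ D * h ^ i) := by
      intro j
      by_cases hj : j < s
      swap
      · exact ⟨0, le_rfl, fun a => absurd a hj⟩
      by_cases hij : i ≤ j
      · obtain ⟨C, hC0, hC⟩ := hw i (by omega) j hj hij
        obtain ⟨A, hA⟩ := (isCompact_Icc (a := (0:ℝ)) (b := 1)).exists_bound_of_continuousOn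
          (f := fun x => (derivative^[i] (legPoly j)).eval x)
          (Polynomial.continuous _).continuousOn
        refine ⟨|A| * C, by positivity, fun _ h hh x hx => ?_⟩
        rw [norm_smul, mul_assoc]
        exact mul_le_mul ((hA x hx).trans (le_abs_self A)) (hC h hh) (norm_nonneg _)
          (abs_nonneg _)
      · refine ⟨0, le_rfl, fun _ h hh x hx => ?_⟩
        rw [iterate_derivative_eq_zero (by have := legPoly_natDegree j; omega)]
        simp
    choose D hD0 hD using h2
    refine ⟨∑ j ∈ Finset.range s, D j, Finset.sum_nonneg fun j _ => hD0 j,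
      fun _ _ h hh x hx => ?_⟩
    rw [iterDeriv_formula s (V h) (fun j => w j h) h (hV h hh) i]
    have hh0 : 0 < h := hh.1
    rw [norm_smul, Real.norm_eq_abs, abs_of_pos hh0, pow_succ, ← mul_assoc, mul_comm]
    refine mul_le_mul_of_nonneg_right ?_ hh0.le
    rw [Finset.sum_mul]
    exact norm_sum_le_of_le _ fun j hj => hD j (Finset.mem_range.1 hj) h hh x hx
  choose D hD0 hD using h1
  have h3 : ∀ i : ℕ, ∃ B : ℝ, 0 ≤ B ∧ ∀ y ∈ K, ‖iteratedFDeriv ℝ i G y‖ ≤ B := by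
    intro i
    obtain ⟨A, hA⟩ := hK.exists_bound_of_continuousOn (f := iteratedFDeriv ℝ i G)
      (hG.continuous_iteratedFDeriv (by exact_mod_cast le_top)).continuousOn
    exact ⟨|A|, abs_nonneg _, fun x hx => (hA x hx).trans (le_abs_self _)⟩
  choose B hB0 hB using h3
  set T : ℝ := 1 + ∑ i ∈ Finset.range (p+1), D i with hT
  have hsum : 0 ≤ ∑ i ∈ Finset.range (p+1), D i := Finset.sum_nonneg fun i _ => hD0 i
  have hT1 : 1 ≤ T := by linarith
  have hBs : 0 ≤ ∑ i ∈ Finset.range (p+1), B i := Finset.sum_nonneg fun i _ => hB0 i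
  refine ⟨p.factorial * (∑ i ∈ Finset.range (p+1), B i) * T ^ p, by positivity,
    fun h hh x hx => ?_⟩
  rw [← norm_iteratedFDeriv_eq_norm_iteratedDeriv, mul_assoc _ (T ^ p), ← mul_pow]
  refine norm_iteratedFDeriv_comp_le hG
    (v_smooth s (V h) (fun j => w j h) h (hV h hh)) (by exact_mod_cast le_top) x ?_ ?_
  · intro i hi
    exact (hB i _ (hVK h hh x hx)).trans
      (Finset.single_le_sum (f := B) (fun i _ => hB0 i) (Finset.mem_range.2 (by omega)))
  · intro i hi1 hi
    rw [norm_iteratedFDeriv_eq_norm_iteratedDeriv, mul_pow]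
    refine (hD i hi1 hi h hh x hx).trans ?_
    refine mul_le_mul_of_nonneg_right ?_ (pow_nonneg hh.1.le _)
    have : D i ≤ ∑ i ∈ Finset.range (p+1), D i :=
      Finset.single_le_sum (f := D) (fun i _ => hD0 i) (Finset.mem_range.2 (by omega))
    calc D i ≤ T := by linarith
      _ ≤ T ^ i := le_self_pow₀ hT1 (by omega)

lemma bootstrap (s k : ℕ) (hk : s ≤ k) (h₀ : ℝ) (G : E → E) (hG : ContDiff ℝ (⊤ : ℕ∞) G)
    (c b : Fin k → ℝ) (hc : ∀ ℓ, c ℓ ∈ Set.Icc (0:ℝ) 1)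
    (hquad : ∀ q : Polynomial ℝ, q.natDegree ≤ 2 * k - 1 →
      ∑ ℓ, b ℓ * q.eval (c ℓ) = ∫ x in (0:ℝ)..1, q.eval x)
    (K : Set E) (hK : IsCompact K) (V : ℝ → ℝ → E) (w : ℕ → ℝ → E)
    (hV : ∀ h ∈ Set.Ioc (0:ℝ) h₀, ∀ x,
      HasDerivAt (V h) (h • ∑ j ∈ Finset.range s, legP j x • w j h) x)
    (hVK : ∀ h ∈ Set.Ioc (0:ℝ) h₀, ∀ x ∈ Set.Icc (0:ℝ) 1, V h x ∈ K)
    (W : ℝ) (hW0 : 0 ≤ W)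
    (hW : ∀ h ∈ Set.Ioc (0:ℝ) h₀, ∀ j < s,
      ‖w j h‖ ≤ W * ‖∑ ℓ, (b ℓ * legP j (c ℓ)) • G (V h (c ℓ))‖) :
    ∀ i, ∀ j < s, i ≤ j → ∃ C : ℝ, 0 ≤ C ∧ ∀ h ∈ Set.Ioc (0:ℝ) h₀,
      ‖w j h‖ ≤ C * h ^ i := by
  intro i
  induction i using Nat.strong_induction_on with
  | _ p ih =>
    intro j hj hpj
    obtain ⟨C, hC0, hC⟩ := comp_bound s h₀ G hG K hK V w hV hVK p ih
    obtain ⟨A, hA0, hA⟩ := gauss_small (E := E) c b hc hquad j p hpj (by omega)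
    refine ⟨W * (A * C), by positivity, fun h hh => ?_⟩
    refine (hW h hh j hj).trans ?_
    rw [mul_assoc, mul_assoc]
    refine mul_le_mul_of_nonneg_left ?_ hW0
    exact hA (G ∘ V h) (hG.comp (v_smooth s (V h) (fun j => w j h) h (hV h hh))) _
      (mul_nonneg hC0 (pow_nonneg hh.1.le _)) (hC h hh)

end core

lemma skew_inner {n : ℕ} (J : Matrix (Fin n) (Fin n) ℝ) (hJ : Jᵀ = -J)
    (x : EuclideanSpace ℝ (Fin n)) : inner ℝ x (Matrix.toEuclideanLin J x) = 0 := by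
  have h1 : (inner ℝ x (Matrix.toEuclideanLin J x) : ℝ) = (x.ofLp) ⬝ᵥ (J *ᵥ x.ofLp) := by
    rw [EuclideanSpace.inner_eq_star_dotProduct, dotProduct_comm]
    simp [Matrix.toLpLin_apply]
  have h2 : (x.ofLp) ⬝ᵥ (J *ᵥ x.ofLp) = - ((x.ofLp) ⬝ᵥ (J *ᵥ x.ofLp)) := by
    conv_lhs => rw [dotProduct_mulVec, ← mulVec_transpose, hJ, neg_mulVec, neg_dotProduct,
      dotProduct_comm]
  rw [h1]; linarith

/-- Theorem 3 of the paper, asymptotic part.  With `J` skew-symmetric,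
`H` of class `C^∞`, a quadrature exact on `Π_{2k-1}`, uniformly bounded coefficients
`η̂_j(h)`, and polynomial maps `u_h ∈ Π_s`, `u_h(0) = y₀`, with range in a fixed compact set,
satisfying `u_h'(ch) = ∑_{j<s} P_j(c) η̂_j(h) γ̂_j(h)` with
`γ̂_j(h) = ∑_ℓ b_ℓ P_j(c_ℓ) J ∇H(u_h(c_ℓ h))`, one has
`H(u_h(h)) - H(y₀) = O(h^{2k+1})` as `h → 0⁺`. -/
theorem stmt13 (m : ℕ) (hm : 1 ≤ m)
    (J : Matrix (Fin (2 * m)) (Fin (2 * m)) ℝ) (hJ : Jᵀ = -J)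
    (H : EuclideanSpace ℝ (Fin (2 * m)) → ℝ) (hH : ContDiff ℝ (⊤ : ℕ∞) H)
    (s k : ℕ) (hs : 1 ≤ s) (hk : s ≤ k)
    (c b : Fin k → ℝ) (hc : ∀ ℓ, c ℓ ∈ Set.Icc (0:ℝ) 1)
    (hquad : ∀ q : Polynomial ℝ, q.natDegree ≤ 2 * k - 1 →
      ∑ ℓ, b ℓ * q.eval (c ℓ) = ∫ x in (0:ℝ)..1, q.eval x)
    (h₀ : ℝ) (hh₀ : 0 < h₀)
    (y₀ : EuclideanSpace ℝ (Fin (2 * m)))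
    (η : ℕ → ℝ → ℝ)
    (hηbdd : ∃ B : ℝ, ∀ h ∈ Set.Ioc (0:ℝ) h₀, ∀ j, j < s → |η j h| ≤ B)
    (u : ℝ → ℝ → EuclideanSpace ℝ (Fin (2 * m)))
    (hu0 : ∀ h ∈ Set.Ioc (0:ℝ) h₀, u h 0 = y₀)
    (hupoly : ∀ h ∈ Set.Ioc (0:ℝ) h₀,
      ∃ a : Fin (s + 1) → EuclideanSpace ℝ (Fin (2 * m)),
        ∀ t : ℝ, u h t = ∑ i : Fin (s + 1), t ^ (i : ℕ) • a i)
    (K : Set (EuclideanSpace ℝ (Fin (2 * m)))) (hK : IsCompact K)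
    (huK : ∀ h ∈ Set.Ioc (0:ℝ) h₀, ∀ t ∈ Set.Icc 0 h, u h t ∈ K)
    (hu' : ∀ h ∈ Set.Ioc (0:ℝ) h₀, ∀ cc ∈ Set.Icc (0:ℝ) 1,
      HasDerivAt (u h)
        (∑ j ∈ Finset.range s, legP j cc •
          (η j h • ∑ ℓ, (b ℓ * legP j (c ℓ)) •
            Matrix.toEuclideanLin J (gradient H (u h (c ℓ * h)))))
        (cc * h)) :
    ∃ C > (0:ℝ), ∃ h₁ > (0:ℝ), ∀ h : ℝ, 0 < h → h ≤ min h₀ h₁ →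
      |H (u h h) - H y₀| ≤ C * h ^ (2 * k + 1) := by
  classical
  obtain ⟨B, hB⟩ := hηbdd
  set G : EuclideanSpace ℝ (Fin (2 * m)) → EuclideanSpace ℝ (Fin (2 * m)) := gradient H with hGdef
  have hG : ContDiff ℝ (⊤ : ℕ∞) G := by
    have h1 : ContDiff ℝ (⊤ : ℕ∞) (fderiv ℝ H) := hH.fderiv_right (by simp)
    exact (InnerProductSpace.toDual ℝ
      (EuclideanSpace ℝ (Fin (2 * m)))).symm.toContinuousLinearEquiv.contDiff.comp h1
  set L := (Matrix.toEuclideanLin J).toContinuousLinearMap with hL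
  set g : ℕ → ℝ → EuclideanSpace ℝ (Fin (2 * m)) := fun j h =>
    ∑ ℓ, (b ℓ * legP j (c ℓ)) • G (u h (c ℓ * h)) with hg
  set w : ℕ → ℝ → EuclideanSpace ℝ (Fin (2 * m)) := fun j h =>
    η j h • Matrix.toEuclideanLin J (g j h) with hw
  have hu2 : ∀ h ∈ Set.Ioc (0:ℝ) h₀, ∀ x ∈ Set.Icc (0:ℝ) 1,
      HasDerivAt (fun x => u h (x * h)) (h • ∑ j ∈ Finset.range s, legP j x • w j h) x := by
    intro h hh x hx
    have h1 := hu' h hh x hx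
    have h2 : HasDerivAt (fun x : ℝ => x * h) h x := by
      simpa using (hasDerivAt_id x).mul_const h
    have h3 := HasDerivAt.scomp x h1 h2
    have h4 : ∀ j, w j h = η j h • ∑ ℓ, (b ℓ * legP j (c ℓ)) •
        Matrix.toEuclideanLin J (G (u h (c ℓ * h))) := by
      intro j
      simp only [hw, hg, map_sum, map_smul]
    simp_rw [h4]
    exact h3
  have hPc : ∀ j, Continuous (legP j) := fun j => by
    have : legP j = fun x => (legPoly j).eval x := funext (legP_eq j)
    rw [this]; exact Polynomial.continuous _
  set V : ℝ → ℝ → EuclideanSpace ℝ (Fin (2 * m)) := fun h x =>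
    y₀ + h • ∑ j ∈ Finset.range s, (∫ t in (0:ℝ)..x, legP j t) • w j h with hVdef
  have hV : ∀ h ∈ Set.Ioc (0:ℝ) h₀, ∀ x,
      HasDerivAt (V h) (h • ∑ j ∈ Finset.range s, legP j x • w j h) x := by
    intro h hh x
    refine HasDerivAt.const_add _ (HasDerivAt.const_smul h ?_)
    refine HasDerivAt.fun_sum fun j _ => HasDerivAt.smul_const ?_ _
    exact intervalIntegral.integral_hasDerivAt_right ((hPc j).intervalIntegrable _ _)
      ((hPc j).stronglyMeasurableAtFilter _ _) (hPc j).continuousAt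
  have hVu : ∀ h ∈ Set.Ioc (0:ℝ) h₀, ∀ x ∈ Set.Icc (0:ℝ) 1, V h x = u h (x * h) := by
    intro h hh
    refine eq_of_has_deriv_right_eq (f' := fun x => h • ∑ j ∈ Finset.range s, legP j x • w j h)
      (fun x hx => (hV h hh x).hasDerivWithinAt)
      (fun x hx => (hu2 h hh x ⟨hx.1, hx.2.le⟩).hasDerivWithinAt)
      (fun x hx => (hV h hh x).continuousAt.continuousWithinAt)
      (fun x hx => (hu2 h hh x hx).continuousAt.continuousWithinAt) ?_
    simp [hVdef, hu0 h hh]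
  have hVK : ∀ h ∈ Set.Ioc (0:ℝ) h₀, ∀ x ∈ Set.Icc (0:ℝ) 1, V h x ∈ K := by
    intro h hh x hx
    rw [hVu h hh x hx]
    exact huK h hh _ ⟨mul_nonneg hx.1 hh.1.le, by nlinarith [hx.2, hh.1]⟩
  have hgV : ∀ h ∈ Set.Ioc (0:ℝ) h₀, ∀ j,
      g j h = ∑ ℓ, (b ℓ * legP j (c ℓ)) • G (V h (c ℓ)) := by
    intro h hh j
    simp only [hg]
    exact Finset.sum_congr rfl fun ℓ _ => by rw [hVu h hh _ (hc ℓ)]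
  have hW : ∀ h ∈ Set.Ioc (0:ℝ) h₀, ∀ j < s,
      ‖w j h‖ ≤ (|B| * ‖L‖) * ‖∑ ℓ, (b ℓ * legP j (c ℓ)) • G (V h (c ℓ))‖ := by
    intro h hh j hj
    rw [← hgV h hh j, mul_assoc]
    simp only [hw]
    rw [norm_smul]
    exact mul_le_mul ((hB h hh j hj).trans (le_abs_self B)) (L.le_opNorm (g j h))
      (norm_nonneg _) (abs_nonneg _)
  have hboot := bootstrap s k hk h₀ G hG c b hc hquad K hK V w hV hVK (|B| * ‖L‖)
    (by positivity) hW
  have hterm : ∀ j : ℕ, ∃ C : ℝ, 0 ≤ C ∧ (j < s → ∀ h ∈ Set.Ioc (0:ℝ) h₀,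
      |∫ x in (0:ℝ)..1, legP j x * inner ℝ (G (V h x)) (w j h)| ≤ C * h ^ (2 * k)) := by
    intro j
    by_cases hj : j < s
    swap
    · exact ⟨0, le_rfl, fun a => absurd a hj⟩
    obtain ⟨C1, hC10, hC1⟩ := hboot j j hj le_rfl
    obtain ⟨C2, hC20, hC2⟩ := comp_bound s h₀ G hG K hK V w hV hVK (2 * k - j)
      (fun i _ => hboot i)
    obtain ⟨A, hA0, hA⟩ := gauss_err (E := EuclideanSpace ℝ (Fin (2 * m))) c b hc hquad j
      (2 * k - j) (by omega)
    refine ⟨A * (C2 * C1), by positivity, fun _ h hh => ?_⟩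
    have hhp : 0 ≤ h := hh.1.le
    have h1 := hA (G ∘ V h) (hG.comp (v_smooth s (V h) (fun j => w j h) h (hV h hh))) _
      (mul_nonneg hC20 (pow_nonneg hh.1.le _)) (hC2 h hh) (w j h)
    have h2 : ∑ ℓ, b ℓ * (legP j (c ℓ) * inner ℝ ((G ∘ V h) (c ℓ)) (w j h)) = 0 := by
      have : ∑ ℓ, b ℓ * (legP j (c ℓ) * inner ℝ ((G ∘ V h) (c ℓ)) (w j h))
          = inner ℝ (g j h) (w j h) := by
        rw [hgV h hh j, sum_inner]
        refine Finset.sum_congr rfl fun ℓ _ => ?_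
        rw [real_inner_smul_left, mul_assoc]; rfl
      rw [this]
      simp only [hw]
      rw [real_inner_smul_right, skew_inner J hJ, mul_zero]
    rw [h2, sub_zero] at h1
    refine h1.trans ?_
    rw [mul_assoc A]
    refine mul_le_mul_of_nonneg_left ?_ hA0
    calc C2 * h ^ (2 * k - j) * ‖w j h‖ ≤ C2 * h ^ (2 * k - j) * (C1 * h ^ j) :=
          mul_le_mul_of_nonneg_left (hC1 h hh) (by positivity)
      _ = C2 * C1 * (h ^ (2 * k - j) * h ^ j) := by ring
      _ = C2 * C1 * h ^ (2 * k) := by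
          rw [← pow_add, Nat.sub_add_cancel (by omega)]
  choose C hC0 hC using hterm
  have hCs : 0 ≤ ∑ j ∈ Finset.range s, C j := Finset.sum_nonneg fun j _ => hC0 j
  refine ⟨1 + ∑ j ∈ Finset.range s, C j, by positivity, 1, one_pos, fun h hpos hle => ?_⟩
  have hh : h ∈ Set.Ioc (0:ℝ) h₀ := ⟨hpos, hle.trans (min_le_left _ _)⟩
  have hVs := v_smooth s (V h) (fun j => w j h) h (hV h hh)
  have hGV : Continuous fun x => G (V h x) := hG.continuous.comp hVs.continuous
  have hder : ∀ x, HasDerivAt (fun x => H (V h x))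
      (h * ∑ j ∈ Finset.range s, legP j x * inner ℝ (G (V h x)) (w j h)) x := by
    intro x
    have h1 : HasGradientAt H (G (V h x)) (V h x) :=
      (hH.differentiable (by simp)).differentiableAt.hasGradientAt
    have h2 := h1.hasFDerivAt.comp_hasDerivAt x (hV h hh x)
    have h3 : h * ∑ j ∈ Finset.range s, legP j x * inner ℝ (G (V h x)) (w j h) =
        inner ℝ (G (V h x)) (h • ∑ j ∈ Finset.range s, legP j x • w j h) := by
      simp only [inner_sum, real_inner_smul_right]
    rw [h3]
    exact h2
  have hint := intervalIntegral.integral_eq_sub_of_hasDerivAt (a := 0) (b := 1)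
    (fun x _ => hder x) (Continuous.intervalIntegrable (by fun_prop) _ _)
  have e1 : V h 1 = u h h := by simpa using hVu h hh 1 (by simp)
  have e0 : V h 0 = y₀ := by simpa [hu0 h hh] using hVu h hh 0 (by simp)
  rw [e1, e0, intervalIntegral.integral_const_mul, intervalIntegral.integral_finsetSum
      (fun i _ => Continuous.intervalIntegrable (by fun_prop) _ _)] at hint
  rw [← hint, abs_mul, abs_of_pos hpos, pow_succ, ← mul_assoc, mul_comm]
  refine mul_le_mul_of_nonneg_right ?_ hpos.le
  refine (Finset.abs_sum_le_sum_abs _ _).trans ?_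
  refine (Finset.sum_le_sum fun j hj => hC j (Finset.mem_range.1 hj) h hh).trans ?_
  rw [← Finset.sum_mul]
  refine mul_le_mul_of_nonneg_right (by linarith) (by positivity)
end

section
/- (Theorem 4 of the paper, exact-conservation part.) Let m ≥ 1, d = 2m, let s > ν ≥ 1, r ≥ s, and let L : ℝ^d → ℝ^ν have polynomial components with s · (max_i deg L_i) ≤ 2r. Let (ĉ_ℓ, b̂_ℓ)_{ℓ=1}^r be a quadrature on [0,1] exact for polynomials of degree ≤ 2r−1, let h > 0, and let γ̂₀, …, γ̂_{s−1} ∈ ℝ^d be arbitrary. Let u : [0,h] → ℝ^d be a polynomial map of degree ≤ s, set φ̂_j = Σ_{ℓ=1}^r b̂_ℓ P_j(ĉ_ℓ) ∇L(u(ĉ_ℓ h)) ∈ ℝ^{d×ν}, and define η̂_j = 1 for 0 ≤ j ≤ s−ν−1 and η̂_j = 1 − h^{2(s−1−j)} α̂_j for s−ν ≤ j ≤ s−1, where the reals α̂_j satisfy Σ_{j=s−ν}^{s−1} h^{2(s−1−j)} α̂_j φ̂_j^T γ̂_j = Σ_{j=0}^{s−1} φ̂_j^T γ̂_j. If u'(ch)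 = Σ_{j=0}^{s−1} P_j(c) η̂_j γ̂_j for all c ∈ [0,1], then L(u(h)) = L(u(0)). -/
open MeasureTheory Polynomial
open scoped RealInnerProductSpace

theorem mv_differentiable {d : ℕ} (P : MvPolynomial (Fin d) ℝ) :
    Differentiable ℝ (fun y : EuclideanSpace ℝ (Fin d) => MvPolynomial.eval (fun n => y n) P) := by
  induction P using MvPolynomial.induction_on with
  | C c => simp
  | add p q hp hq => simp only [map_add]; exact hp.add hq
  | mul_X p n hp =>
    have hn : Differentiable ℝ (fun y : EuclideanSpace ℝ (Fin d) => y n) := by fun_prop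
    simp only [map_mul, MvPolynomial.eval_X]; exact hp.mul hn

/-- Theorem 4 of the paper, exact-conservation part.  If the components
of `L : ℝ^d → ℝ^ν` are polynomials with `s · max_i deg L_i ≤ 2r`, the quadrature
`(ĉ_ℓ, b̂_ℓ)` is exact on `Π_{2r-1}`, `u ∈ Π_s`,
`φ̂_j = ∑_ℓ b̂_ℓ P_j(ĉ_ℓ) ∇L(u(ĉ_ℓ h))`, `η̂_j = 1` for `j ≤ s-ν-1` and
`η̂_j = 1 - h^{2(s-1-j)} α̂_j` otherwise, with the `α̂_j` solving
`∑_{j=s-ν}^{s-1} h^{2(s-1-j)} α̂_j φ̂_jᵀ γ̂_j = ∑_{j=0}^{s-1} φ̂_jᵀ γ̂_j`, and if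
`u'(ch) = ∑_{j<s} P_j(c) η̂_j γ̂_j` on `[0,1]`, then `L(u(h)) = L(u(0))`. -/
theorem stmt14 (m : ℕ) (hm : 1 ≤ m) (s ν r : ℕ) (hν : 1 ≤ ν) (hνs : ν < s) (hr : s ≤ r)
    (L : Fin ν → MvPolynomial (Fin (2 * m)) ℝ)
    (hLdeg : ∀ i, s * (L i).totalDegree ≤ 2 * r)
    (Lf : Fin ν → EuclideanSpace ℝ (Fin (2 * m)) → ℝ)
    (hLf : ∀ i y, Lf i y = MvPolynomial.eval (fun n => y n) (L i))
    (ch bh : Fin r → ℝ) (hch : ∀ ℓ, ch ℓ ∈ Set.Icc (0:ℝ) 1)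
    (hquad : ∀ q : Polynomial ℝ, q.natDegree ≤ 2 * r - 1 →
      ∑ ℓ, bh ℓ * q.eval (ch ℓ) = ∫ x in (0:ℝ)..1, q.eval x)
    (h : ℝ) (hh : 0 < h)
    (γc : ℕ → EuclideanSpace ℝ (Fin (2 * m)))
    (u : ℝ → EuclideanSpace ℝ (Fin (2 * m)))
    (hupoly : ∃ a : Fin (s + 1) → EuclideanSpace ℝ (Fin (2 * m)),
      ∀ t : ℝ, u t = ∑ i : Fin (s + 1), t ^ (i : ℕ) • a i)
    (φ : ℕ → Fin ν → EuclideanSpace ℝ (Fin (2 * m)))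
    (hφ : ∀ j i, φ j i = ∑ ℓ, (bh ℓ * legP j (ch ℓ)) • gradient (Lf i) (u (ch ℓ * h)))
    (α : ℕ → ℝ)
    (hα : ∀ i : Fin ν,
      ∑ j ∈ Finset.Ico (s - ν) s, h ^ (2 * (s - 1 - j)) * α j * ⟪φ j i, γc j⟫ =
      ∑ j ∈ Finset.range s, ⟪φ j i, γc j⟫)
    (η : ℕ → ℝ)
    (hη₁ : ∀ j, j ≤ s - ν - 1 → η j = 1)
    (hη₂ : ∀ j, s - ν ≤ j → j ≤ s - 1 → η j = 1 - h ^ (2 * (s - 1 - j)) * α j)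
    (hu' : ∀ cc ∈ Set.Icc (0:ℝ) 1,
      HasDerivAt u (∑ j ∈ Finset.range s, legP j cc • (η j • γc j)) (cc * h)) :
    ∀ i : Fin ν, Lf i (u h) = Lf i (u 0) := by
  classical
  intro i
  obtain ⟨a, ha⟩ := hupoly
  set U : Fin (2 * m) → Polynomial ℝ :=
    fun n => ∑ k : Fin (s + 1), Polynomial.C ((a k) n * h ^ (k : ℕ)) * Polynomial.X ^ (k : ℕ) with hU
  have hUeval : ∀ n x, (U n).eval x = u (x * h) n := by
    intro n x
    rw [ha]
    simp only [hU, Polynomial.eval_finsetSum, Polynomial.eval_mul, Polynomial.eval_C,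
      Polynomial.eval_pow, Polynomial.eval_X, WithLp.ofLp_sum, Finset.sum_apply,
      PiLp.smul_apply, smul_eq_mul, mul_pow]
    exact Finset.sum_congr rfl fun k _ => by ring
  have hUdeg : ∀ n, (U n).natDegree ≤ s := by
    intro n
    refine Polynomial.natDegree_sum_le_of_forall_le _ _ fun k _ => ?_
    exact (Polynomial.natDegree_C_mul_X_pow_le _ _).trans (by omega)
  set p : Polynomial ℝ := MvPolynomial.aeval U (L i) with hp
  have hpeval : ∀ x, p.eval x = Lf i (u (x * h)) := by
    intro x
    rw [hLf, hp, ← Polynomial.coe_evalRingHom, MvPolynomial.aeval_def, MvPolynomial.hom_eval₂,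
      MvPolynomial.eval, MvPolynomial.coe_eval₂Hom]
    congr 1
    · ext y; simp
    · funext n; simp [hUeval]
  have hpdeg : p.natDegree ≤ 2 * r := by
    refine le_trans ?_ (hLdeg i)
    rw [mul_comm]
    exact MvPolynomial.aeval_natDegree_le (L i) le_rfl U hUdeg
  have hdiff : Differentiable ℝ (Lf i) := by
    have : Lf i = fun y => MvPolynomial.eval (fun n => y n) (L i) := funext (hLf i)
    rw [this]
    exact mv_differentiable (L i)
  have hder : ∀ x ∈ Set.Icc (0:ℝ) 1, p.derivative.eval x =
      h * ⟪gradient (Lf i) (u (x * h)), ∑ j ∈ Finset.range s, legP j x • (η j • γc j)⟫ := by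
    intro x hx
    have h1 := (hdiff (u (x * h))).hasGradientAt.hasFDerivAt.comp_hasDerivAt (x * h) (hu' x hx)
    have h2 := HasDerivAt.comp x h1 ((hasDerivAt_id x).mul_const h)
    have h3 := p.hasDerivAt x
    have : (fun x => p.eval x) = (Lf i ∘ u) ∘ fun x => id x * h := by
      funext x; simp [hpeval]
    rw [this] at h3
    rw [h3.unique h2]
    simp [mul_comm]
  have hint : ∫ x in (0:ℝ)..1, p.derivative.eval x = p.eval 1 - p.eval 0 :=
    intervalIntegral.integral_eq_sub_of_hasDerivAt (fun x _ => p.hasDerivAt x)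
      (p.derivative.continuous.intervalIntegrable _ _)
  have hq := hquad p.derivative ((Polynomial.natDegree_derivative_le p).trans (by omega))
  rw [hint, hpeval, hpeval, one_mul, zero_mul] at hq
  have hsum : ∑ ℓ, bh ℓ * p.derivative.eval (ch ℓ) =
      h * ∑ j ∈ Finset.range s, η j * ⟪φ j i, γc j⟫ := by
    simp only [hφ, sum_inner, real_inner_smul_left, Finset.mul_sum]
    rw [Finset.sum_comm]
    refine Finset.sum_congr rfl fun ℓ _ => ?_
    rw [hder _ (hch ℓ), inner_sum, Finset.mul_sum, Finset.mul_sum]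
    refine Finset.sum_congr rfl fun j _ => ?_
    rw [real_inner_smul_right, real_inner_smul_right]
    ring
  have hzero : ∑ j ∈ Finset.range s, η j * ⟪φ j i, γc j⟫ = 0 := by
    have e1 := Finset.sum_range_add_sum_Ico (fun j => η j * ⟪φ j i, γc j⟫)
      (show s - ν ≤ s by omega)
    have e2 := Finset.sum_range_add_sum_Ico (fun j => ⟪φ j i, γc j⟫)
      (show s - ν ≤ s by omega)
    have e3 : ∑ j ∈ Finset.range (s - ν), η j * ⟪φ j i, γc j⟫ =
        ∑ j ∈ Finset.range (s - ν), ⟪φ j i, γc j⟫ := by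
      refine Finset.sum_congr rfl fun j hj => ?_
      rw [Finset.mem_range] at hj
      rw [hη₁ j (by omega), one_mul]
    have e4 : ∑ j ∈ Finset.Ico (s - ν) s, η j * ⟪φ j i, γc j⟫ =
        ∑ j ∈ Finset.Ico (s - ν) s, ⟪φ j i, γc j⟫ -
        ∑ j ∈ Finset.Ico (s - ν) s, h ^ (2 * (s - 1 - j)) * α j * ⟪φ j i, γc j⟫ := by
      rw [← Finset.sum_sub_distrib]
      refine Finset.sum_congr rfl fun j hj => ?_
      rw [Finset.mem_Ico] at hj
      rw [hη₂ j hj.1 (by omega)]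
      ring
    have e5 := hα i
    linarith
  rw [hsum, hzero, mul_zero] at hq
  linarith
end

section
/- (Theorem 4 of the paper, asymptotic part.) Let m ≥ 1, d = 2m, s > ν ≥ 1, r ≥ s, and let L : ℝ^d → ℝ^ν be C^∞. Let (ĉ_ℓ, b̂_ℓ)_{ℓ=1}^r be a quadrature on [0,1] exact for polynomials of degree ≤ 2r−1. Suppose that for each h ∈ (0, h₀] there are a polynomial map u_h : [0,h] → ℝ^d of degree ≤ s with range in a fixed compact set, vectors γ̂₀(h), …, γ̂_{s−1}(h) ∈ ℝ^d with γ̂_j(h) = O(h^j), and reals η̂_j(h) with η̂_j(h) = 1 for j ≤ s−ν−1 and η̂_j(h) = 1 − h^{2(s−1−j)} α̂_j(h) otherwise, with α̂_j(h) = O(h²) and with the α̂_j(h) satisfying Σ_{j=s−ν}^{s−1} h^{2(s−1−j)} α̂_j(h) φ̂_j(h)^T γ̂_j(h) = Σ_{j=0}^{s−1} φ̂_j(h)^T γ̂_j(h), where φ̂_j(h) = Σ_{ℓ=1}^r b̂_ℓ P_j(ĉ_ℓ) ∇L(u_h(ĉ_ℓ h)), and such that u_h'(ch) = Σ_{j=0}^{s−1}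 P_j(c) η̂_j(h) γ̂_j(h) for c ∈ [0,1]. Then L(u_h(h)) − L(u_h(0)) is O(h^{2r+1}) as h → 0⁺. -/
open MeasureTheory Polynomial
open scoped RealInnerProductSpace

/-- Polynomial antiderivative vanishing at zero. -/
lemma exists_antider (q : ℝ[X]) : ∃ Q : ℝ[X], derivative Q = q ∧ Q.coeff 0 = 0 ∧
    ∀ n, q.natDegree < n → Q.natDegree < n + 1 := by
  refine ⟨∑ k ∈ Finset.range (q.natDegree + 1), monomial (k + 1) (q.coeff k / (k + 1)), ?_, ?_, ?_⟩
  · rw [derivative_sum]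
    conv_rhs => rw [q.as_sum_range]
    refine Finset.sum_congr rfl fun k _ => ?_
    rw [derivative_monomial]
    have : ((k : ℝ) + 1) ≠ 0 := by positivity
    simp only [Nat.add_sub_cancel, Nat.cast_add, Nat.cast_one]
    rw [div_mul_cancel₀ _ this]
  · rw [finsetSum_coeff]
    refine Finset.sum_eq_zero fun k _ => ?_
    simp [coeff_monomial]
  · intro n hn
    have := natDegree_sum_le_of_forall_le (n := q.natDegree + 1) (Finset.range (q.natDegree + 1))
      (fun k => monomial (k + 1) (q.coeff k / ((k:ℝ) + 1))) (by
        intro k hk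
        refine (natDegree_monomial_le _).trans ?_
        have := Finset.mem_range.1 hk
        omega)
    omega

/-- Uniform Taylor expansion with parameters in a compact set. -/
lemma unif_taylor {E : Type*} [NormedAddCommGroup E] [NormedSpace ℝ E] (K : Set E)
    (hK : IsCompact K) (n : ℕ) : ∀ (G : E × ℝ → ℝ), ContDiff ℝ (⊤ : ℕ∞) G →
    ∃ C ≥ (0:ℝ), ∀ e ∈ K, ∃ q : ℝ[X], q.natDegree < n + 1 ∧ ∀ t ∈ Set.Icc (0:ℝ) 1,
      |G (e, t) - q.eval t| ≤ C * t ^ (n + 1) := by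
  have key : ∀ (G : E × ℝ → ℝ), ContDiff ℝ (⊤ : ℕ∞) G → ∃ G' : E × ℝ → ℝ,
      ContDiff ℝ (⊤ : ℕ∞) G' ∧ ∀ e t, HasDerivAt (fun t => G (e, t)) (G' (e, t)) t := by
    intro G hG
    refine ⟨fun x => fderiv ℝ G x (0, 1), ?_, ?_⟩
    · exact (hG.fderiv_right (by simp)).clm_apply contDiff_const
    · intro e t
      have h1 : HasFDerivAt G (fderiv ℝ G (e, t)) (e, t) :=
        (hG.differentiable (by simp)).differentiableAt.hasFDerivAt
      exact h1.comp_hasDerivAt t ((hasDerivAt_const t e).prodMk (hasDerivAt_id t))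
  have mv : ∀ (C : ℝ) (k : ℕ) (D D' : ℝ → ℝ), 0 ≤ C → D 0 = 0 → (∀ t, HasDerivAt D (D' t) t) →
      (∀ t ∈ Set.Icc (0:ℝ) 1, |D' t| ≤ C * t ^ k) →
      ∀ t ∈ Set.Icc (0:ℝ) 1, |D t| ≤ C * t ^ (k + 1) := by
    intro C k D D' hC h0 hD hb t ht
    have := Convex.norm_image_sub_le_of_norm_hasDerivWithin_le (f := D) (f' := D')
      (s := Set.Icc 0 t) (x := 0) (y := t) (C := C * t ^ k)
      (fun x _ => (hD x).hasDerivWithinAt) (by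
        intro x hx
        refine (hb x ⟨hx.1, hx.2.trans ht.2⟩).trans ?_
        have := hx.1
        have := hx.2
        gcongr) (convex_Icc _ _) ⟨le_rfl, ht.1⟩ ⟨ht.1, le_rfl⟩
    rw [h0, sub_zero, sub_zero, Real.norm_eq_abs, Real.norm_eq_abs, abs_of_nonneg ht.1] at this
    rw [pow_succ, ← mul_assoc]; exact this
  induction n with
  | zero =>
    intro G hG
    obtain ⟨G', hG', hd⟩ := key G hG
    obtain ⟨C, hC⟩ := (hK.prod (isCompact_Icc (a := (0:ℝ)) (b := 1))).exists_bound_of_continuousOn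
      hG'.continuous.continuousOn
    refine ⟨max C 0, le_max_right _ _, fun e he => ⟨Polynomial.C (G (e, 0)), by simp, ?_⟩⟩
    refine mv (max C 0) 0 (fun t => G (e, t) - (Polynomial.C (G (e, 0))).eval t)
      (fun t => G' (e, t)) (le_max_right _ _) (by simp) ?_ ?_
    · intro t
      simpa using (hd e t).sub_const (G (e, 0))
    · intro t ht
      simpa using Or.inl (hC (e, t) ⟨he, ht⟩)
  | succ n ih =>
    intro G hG
    obtain ⟨G', hG', hd⟩ := key G hG
    obtain ⟨C, hC0, hC⟩ := ih G' hG'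
    refine ⟨C, hC0, fun e he => ?_⟩
    obtain ⟨q, hq, hqb⟩ := hC e he
    obtain ⟨Q, hQ, hQ0, hQd⟩ := exists_antider q
    refine ⟨Polynomial.C (G (e, 0)) + Q, ?_, ?_⟩
    · have h1 := hQd _ hq
      have h2 := natDegree_add_le (Polynomial.C (G (e, 0))) Q
      simp only [natDegree_C] at h2
      have : max 0 Q.natDegree = Q.natDegree := by simp
      omega
    · refine mv C (n + 1) (fun t => G (e, t) - (Polynomial.C (G (e, 0)) + Q).eval t)
        (fun t => G' (e, t) - q.eval t) hC0 ?_ ?_ hqb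
      · simp [← coeff_zero_eq_eval_zero, hQ0]
      · intro t
        have h2 := (Polynomial.C (G (e, 0)) + Q).hasDerivAt t
        have h4 : derivative (Polynomial.C (G (e, 0)) + Q) = q := by simp [hQ]
        rw [h4] at h2
        exact (hd e t).sub h2

/-- Quadrature error estimate. -/
lemma quad_err {r : ℕ} (ch bh : Fin r → ℝ) (hch : ∀ ℓ, ch ℓ ∈ Set.Icc (0:ℝ) 1)
    (p Q : ℝ[X]) (f : ℝ → ℝ) (hf : Continuous f)
    (hq : ∑ ℓ, bh ℓ * (p * Q).eval (ch ℓ) = ∫ x in (0:ℝ)..1, (p * Q).eval x)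
    (M ε : ℝ) (hM0 : 0 ≤ M) (hM : ∀ x ∈ Set.Icc (0:ℝ) 1, |p.eval x| ≤ M)
    (hε : ∀ x ∈ Set.Icc (0:ℝ) 1, |f x - Q.eval x| ≤ ε) :
    |(∫ x in (0:ℝ)..1, p.eval x * f x) - ∑ ℓ, bh ℓ * p.eval (ch ℓ) * f (ch ℓ)|
      ≤ (1 + ∑ ℓ, |bh ℓ|) * (M * ε) := by
  have hpt : ∀ x ∈ Set.Icc (0:ℝ) 1, |p.eval x * (f x - Q.eval x)| ≤ M * ε := by
    intro x hx
    rw [abs_mul]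
    exact mul_le_mul (hM x hx) (hε x hx) (abs_nonneg _) hM0
  have h1 : (∫ x in (0:ℝ)..1, p.eval x * f x) =
      (∫ x in (0:ℝ)..1, p.eval x * (f x - Q.eval x)) + ∫ x in (0:ℝ)..1, (p * Q).eval x := by
    rw [← intervalIntegral.integral_add]
    · congr 1; ext x; rw [eval_mul]; ring
    · exact (p.continuous.mul (hf.sub Q.continuous)).intervalIntegrable _ _
    · exact (p * Q).continuous.intervalIntegrable _ _
  have h2 : ∑ ℓ, bh ℓ * p.eval (ch ℓ) * f (ch ℓ) =
      ∑ ℓ, bh ℓ * (p.eval (ch ℓ) * (f (ch ℓ) - Q.eval (ch ℓ)))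
        + ∑ ℓ, bh ℓ * (p * Q).eval (ch ℓ) := by
    rw [← Finset.sum_add_distrib]
    refine Finset.sum_congr rfl fun ℓ _ => ?_
    rw [eval_mul]; ring
  rw [h1, h2, hq, add_sub_add_right_eq_sub, add_mul, one_mul, Finset.sum_mul]
  refine (abs_sub _ _).trans (add_le_add ?_ ?_)
  · have := intervalIntegral.norm_integral_le_of_norm_le_const (a := 0) (b := 1) (C := M * ε)
      (f := fun x => p.eval x * (f x - Q.eval x)) (by
        intro x hx
        rw [Set.uIoc_of_le zero_le_one] at hx
        exact hpt x ⟨hx.1.le, hx.2⟩)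
    simpa using this
  · refine (Finset.abs_sum_le_sum_abs _ _).trans (Finset.sum_le_sum fun ℓ _ => ?_)
    rw [abs_mul]
    exact mul_le_mul_of_nonneg_left (hpt _ (hch ℓ)) (abs_nonneg _)

/-- Making finitely many `O` bounds uniform. -/
lemma unif_bound (f w : ℕ → ℝ → ℝ) (hw : ∀ j h, 0 < h → 0 ≤ w j h) (s : ℕ)
    (H : ∀ j, j < s → ∃ C > (0:ℝ), ∃ h₁ > (0:ℝ), ∀ h : ℝ, 0 < h → h ≤ h₁ → f j h ≤ C * w j h) :
    ∃ C > (0:ℝ), ∃ h₁ > (0:ℝ), ∀ h : ℝ, 0 < h → h ≤ h₁ → ∀ j, j < s → f j h ≤ C * w j h := by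
  induction s with
  | zero => exact ⟨1, one_pos, 1, one_pos, fun _ _ _ j hj => absurd hj (by omega)⟩
  | succ s ih =>
    obtain ⟨C, hC, h₁, hh₁, hb⟩ := ih fun j hj => H j (by omega)
    obtain ⟨C', hC', h₁', hh₁', hb'⟩ := H s (by omega)
    refine ⟨max C C', lt_max_of_lt_left hC, min h₁ h₁', lt_min hh₁ hh₁', fun h h0 hh j hj => ?_⟩
    rcases Nat.lt_succ_iff_lt_or_eq.1 hj with hj | rfl
    · exact (hb h h0 (hh.trans (min_le_left _ _)) j hj).trans
        (mul_le_mul_of_nonneg_right (le_max_left _ _) (hw _ _ h0))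
    · exact (hb' h h0 (hh.trans (min_le_right _ _))).trans
        (mul_le_mul_of_nonneg_right (le_max_right _ _) (hw _ _ h0))

lemma exists_legPoly (j : ℕ) : ∃ p : ℝ[X], p.natDegree ≤ j ∧ ∀ x, legP j x = p.eval x := by
  refine ⟨Polynomial.C (Real.sqrt (2 * j + 1) / (Nat.factorial j)) *
    (derivative^[j] ((X ^ 2 - X) ^ j)), ?_, ?_⟩
  · refine (natDegree_C_mul_le _ _).trans ((natDegree_iterate_derivative _ _).trans ?_)
    have h1 : ((X ^ 2 - X : ℝ[X]) ^ j).natDegree ≤ j * 2 := by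
      refine natDegree_pow_le.trans (Nat.mul_le_mul_left _ ?_)
      compute_degree
    omega
  · intro x
    simp [legP]

/-- The polynomial path with rescaled parameters `e = (x₀, h, g, γ)`. -/
noncomputable def pathU {V : Type*} [NormedAddCommGroup V] [InnerProductSpace ℝ V] (s : ℕ)
    (A : ℕ → ℝ[X]) (x : (V × ℝ × (Fin s → V) × V) × ℝ) : V :=
  x.1.1 + ∑ j : Fin s, (∑ k ∈ Finset.range (j + 1),
    (A j).coeff (k + 1) * x.2 ^ (k + 1) * x.1.2.1 ^ ((j : ℕ) - k)) • x.1.2.2.1 j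

lemma contDiff_pathU {V : Type*} [NormedAddCommGroup V] [InnerProductSpace ℝ V] (s : ℕ)
    (A : ℕ → ℝ[X]) : ContDiff ℝ (⊤ : ℕ∞) (pathU (V := V) s A) := by
  unfold pathU
  have h1 : ContDiff ℝ (⊤ : ℕ∞) (fun x : (V × ℝ × (Fin s → V) × V) × ℝ => x.1.2.1) := by fun_prop
  have h2 : ∀ j : Fin s, ContDiff ℝ (⊤ : ℕ∞)
      (fun x : (V × ℝ × (Fin s → V) × V) × ℝ => x.1.2.2.1 j) := by
    intro j
    have h3 : ContDiff ℝ (⊤ : ℕ∞)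
      (fun x : (V × ℝ × (Fin s → V) × V) × ℝ => x.1.2.2.1) := by fun_prop
    exact (contDiff_pi.1 h3) j
  refine ContDiff.add (by fun_prop) (ContDiff.sum fun j _ => ContDiff.smul ?_ (h2 j))
  refine ContDiff.sum fun k _ => ContDiff.mul (by fun_prop) (h1.pow _)

lemma pathU_eq {V : Type*} [NormedAddCommGroup V] [InnerProductSpace ℝ V] (s : ℕ)
    (p A : ℕ → ℝ[X]) (hp : ∀ j, (p j).natDegree ≤ j) (hA : ∀ j, derivative (A j) = p j)
    (hA0 : ∀ j, (A j).coeff 0 = 0) (hAd : ∀ j, (A j).natDegree < j + 2)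
    (h : ℝ) (hh : 0 < h) (v : ℝ → V) (γ : ℕ → V) (η : ℕ → ℝ) (w : V)
    (hv : ∀ c ∈ Set.Icc (0:ℝ) 1,
      HasDerivAt v (∑ j ∈ Finset.range s, (p j).eval c • (η j • γ j)) (c * h))
    (c : ℝ) (hc : c ∈ Set.Icc (0:ℝ) 1) :
    v (c * h) = pathU s A ((v 0, h, fun j : Fin s => (η j / h ^ (j : ℕ)) • γ j, w), c * h) := by
  have hW : pathU s A ((v 0, h, fun j : Fin s => (η j / h ^ (j : ℕ)) • γ j, w), c * h) =
      v 0 + ∑ j ∈ Finset.range s, (h * (A j).eval c) • (η j • γ j) := by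
    unfold pathU
    simp only
    rw [Finset.sum_range]
    congr 1
    refine Finset.sum_congr rfl fun j _ => ?_
    have h1 : ∑ k ∈ Finset.range ((j : ℕ) + 1),
        (A j).coeff (k + 1) * (c * h) ^ (k + 1) * h ^ ((j : ℕ) - k) =
        h ^ ((j : ℕ) + 1) * (A j).eval c := by
      rw [eval_eq_sum_range' (hAd j), Finset.sum_range_succ' (fun i => (A j).coeff i * c ^ i), hA0, zero_mul, add_zero,
        Finset.mul_sum]
      refine Finset.sum_congr rfl fun k hk => ?_
      have hk' : k < j + 1 := Finset.mem_range.1 hk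
      have : h ^ ((j : ℕ) + 1) = h ^ (k + 1) * h ^ ((j : ℕ) - k) := by
        rw [← pow_add]; congr 1; omega
      rw [this, mul_pow]; ring
    rw [h1, smul_smul, smul_smul]
    congr 1
    field_simp
    ring
  rw [hW]
  have hD : ∀ x ∈ Set.Icc (0:ℝ) 1, HasDerivAt (fun c => v (c * h) -
      (v 0 + ∑ j ∈ Finset.range s, (h * (A j).eval c) • (η j • γ j))) 0 x := by
    intro x hx
    have h1 : HasDerivAt (fun c => v (c * h))
        (h • ∑ j ∈ Finset.range s, (p j).eval x • (η j • γ j)) x := by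
      have := (hv x hx).scomp x ((hasDerivAt_id x).mul_const h)
      simpa [Function.comp_def] using this
    have h2 : HasDerivAt (fun c => v 0 + ∑ j ∈ Finset.range s, (h * (A j).eval c) • (η j • γ j))
        (∑ j ∈ Finset.range s, (h * (p j).eval x) • (η j • γ j)) x := by
      refine HasDerivAt.const_add _ (HasDerivAt.fun_sum fun j _ => ?_)
      have := (A j).hasDerivAt x
      rw [hA] at this
      exact (this.const_mul h).smul_const _
    have h3 := h1.sub h2
    have h4 : (h • ∑ j ∈ Finset.range s, (p j).eval x • (η j • γ j)) -
        (∑ j ∈ Finset.range s, (h * (p j).eval x) • (η j • γ j)) = 0 := by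
      rw [Finset.smul_sum, sub_eq_zero]
      exact Finset.sum_congr rfl fun j _ => by rw [smul_smul]
    rw [h4] at h3
    exact h3
  have := Convex.norm_image_sub_le_of_norm_hasDerivWithin_le (f := fun c => v (c * h) -
      (v 0 + ∑ j ∈ Finset.range s, (h * (A j).eval c) • (η j • γ j))) (f' := fun _ => 0)
      (s := Set.Icc (0:ℝ) 1) (x := 0) (y := c) (C := 0)
      (fun x hx => (hD x hx).hasDerivWithinAt) (by simp) (convex_Icc _ _) ⟨le_rfl, zero_le_one⟩ hc
  have hz : ∀ j, (A j).eval 0 = 0 := fun j => by rw [← coeff_zero_eq_eval_zero, hA0]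
  simp only [zero_mul, norm_le_zero_iff, hz, mul_zero, zero_smul, Finset.sum_const_zero, add_zero,
    sub_self, sub_zero] at this
  exact sub_eq_zero.1 this

lemma core {V : Type*} [NormedAddCommGroup V] [InnerProductSpace ℝ V] [ProperSpace V]
    (s r : ℕ) (hr : s ≤ r) (p : ℕ → ℝ[X]) (hp : ∀ j, (p j).natDegree ≤ j)
    (L : V → ℝ) (hL : ContDiff ℝ (⊤ : ℕ∞) L)
    (ch bh : Fin r → ℝ) (hch : ∀ ℓ, ch ℓ ∈ Set.Icc (0:ℝ) 1)
    (hquad : ∀ q : Polynomial ℝ, q.natDegree ≤ 2 * r - 1 →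
      ∑ ℓ, bh ℓ * q.eval (ch ℓ) = ∫ x in (0:ℝ)..1, q.eval x)
    (K : Set V) (hK : IsCompact K) (B : ℝ) (hB : 0 ≤ B) :
    ∃ C ≥ (0:ℝ), ∀ h : ℝ, 0 < h → h ≤ 1 → ∀ (v : ℝ → V) (γ : ℕ → V) (η : ℕ → ℝ),
      Continuous v → v 0 ∈ K → (∀ j, j < s → ‖γ j‖ ≤ B * h ^ j) → (∀ j, j < s → |η j| ≤ B) →
      (∀ c ∈ Set.Icc (0:ℝ) 1,
        HasDerivAt v (∑ j ∈ Finset.range s, (p j).eval c • (η j • γ j)) (c * h)) →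
      (∑ j ∈ Finset.range s, η j *
        ∑ ℓ, bh ℓ * (p j).eval (ch ℓ) * fderiv ℝ L (v (ch ℓ * h)) (γ j) = 0) →
      |L (v h) - L (v 0)| ≤ C * h ^ (2 * r + 1) := by
  choose A hA hA0 hAd using fun j => exists_antider (p j)
  have hAd' : ∀ j, (A j).natDegree < j + 2 := fun j => hAd j (j + 1) (by have := hp j; omega)
  let KK : Set (V × ℝ × (Fin s → V) × V) :=
    K ×ˢ (Set.Icc (0:ℝ) 1 ×ˢ (Metric.closedBall (0 : Fin s → V) (B * B) ×ˢ
      Metric.closedBall (0 : V) B))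
  have hKK : IsCompact KK := hK.prod (isCompact_Icc.prod
    ((isCompact_closedBall _ _).prod (isCompact_closedBall _ _)))
  have hdL : ContDiff ℝ (⊤ : ℕ∞) (fderiv ℝ L) := hL.fderiv_right (by simp)
  have hG : ContDiff ℝ (⊤ : ℕ∞) (fun x : (V × ℝ × (Fin s → V) × V) × ℝ =>
      fderiv ℝ L (pathU s A x) x.1.2.2.2) :=
    (hdL.comp (contDiff_pathU s A)).clm_apply (by fun_prop)
  choose CT hCT0 hCT using fun j : ℕ => unif_taylor KK hKK (2 * r - j - 1) _ hG
  have hM : ∀ j, ∃ M ≥ (0:ℝ), ∀ x ∈ Set.Icc (0:ℝ) 1, |(p j).eval x| ≤ M := by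
    intro j
    obtain ⟨M, hM⟩ := (isCompact_Icc (a := (0:ℝ)) (b := 1)).exists_bound_of_continuousOn
      (p j).continuous.continuousOn
    exact ⟨max M 0, le_max_right _ _, fun x hx => (hM x hx).trans (le_max_left _ _)⟩
  choose M hM0 hM using hM
  have hS : 0 ≤ 1 + ∑ ℓ, |bh ℓ| := by positivity
  refine ⟨∑ j ∈ Finset.range s, B * ((1 + ∑ ℓ, |bh ℓ|) * (M j * CT j)), ?_, ?_⟩
  · exact Finset.sum_nonneg fun j _ => mul_nonneg hB (mul_nonneg hS (mul_nonneg (hM0 j) (hCT0 j)))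
  intro h hh hh1 v γ η hvc hv0 hγ hη hv hsum
  -- per-j error
  have herr : ∀ j, j < s → |(∫ x in (0:ℝ)..1, (p j).eval x * fderiv ℝ L (v (x * h)) (γ j)) -
      ∑ ℓ, bh ℓ * (p j).eval (ch ℓ) * fderiv ℝ L (v (ch ℓ * h)) (γ j)|
      ≤ (1 + ∑ ℓ, |bh ℓ|) * (M j * (CT j * h ^ (2 * r))) := by
    intro j hj
    have hjp : 0 < h ^ j := pow_pos hh j
    let e : V × ℝ × (Fin s → V) × V :=
      (v 0, h, fun j : Fin s => (η j / h ^ (j : ℕ)) • γ j, (1 / h ^ j) • γ j)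
    have he : e ∈ KK := by
      refine ⟨hv0, ⟨hh.le, hh1⟩, ?_, ?_⟩
      · rw [mem_closedBall_zero_iff, pi_norm_le_iff_of_nonneg (by positivity)]
        intro i
        have hi : 0 < h ^ (i : ℕ) := pow_pos hh _
        show ‖(η i / h ^ (i : ℕ)) • γ i‖ ≤ B * B
        rw [norm_smul, Real.norm_eq_abs, abs_div, abs_of_pos hi, div_mul_eq_mul_div, div_le_iff₀ hi,
          mul_assoc]
        exact mul_le_mul (hη i i.2) (hγ i i.2) (norm_nonneg _) hB
      · rw [mem_closedBall_zero_iff]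
        show ‖(1 / h ^ j) • γ j‖ ≤ B
        rw [norm_smul, Real.norm_eq_abs, abs_div, abs_of_pos hjp, abs_one, div_mul_eq_mul_div,
          div_le_iff₀ hjp, one_mul]
        exact hγ j hj
    obtain ⟨q, hq, hqb⟩ := hCT j e he
    refine quad_err ch bh hch (p j) (Polynomial.C (h ^ j) * q.comp (Polynomial.C h * X))
      (fun x => fderiv ℝ L (v (x * h)) (γ j)) ?_ ?_ (M j) _ (hM0 j) (hM j) ?_
    · exact (hdL.continuous.comp (hvc.comp (by fun_prop))).clm_apply continuous_const
    · apply hquad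
      have h1 : (Polynomial.C (h ^ j) * q.comp (Polynomial.C h * X)).natDegree ≤ q.natDegree := by
        refine (natDegree_C_mul_le _ _).trans (natDegree_comp_le.trans ?_)
        have : (Polynomial.C h * X : ℝ[X]).natDegree ≤ 1 := by
          compute_degree
        calc _ ≤ q.natDegree * 1 := Nat.mul_le_mul_left _ this
          _ = _ := mul_one _
      have h2 := natDegree_mul_le (p := p j) (q := Polynomial.C (h ^ j) * q.comp (Polynomial.C h * X))
      have h3 := hp j
      omega
    · intro x hx
      have hxh : x * h ∈ Set.Icc (0:ℝ) 1 :=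
        ⟨mul_nonneg hx.1 hh.le, mul_le_one₀ hx.2 hh.le hh1⟩
      have h1 := hqb (x * h) hxh
      have h2 := pathU_eq s p A hp hA hA0 hAd' h hh v γ η ((1 / h ^ j) • γ j) hv x hx
      simp only [e] at h1
      rw [← h2, map_smul, smul_eq_mul] at h1
      have h3 : fderiv ℝ L (v (x * h)) (γ j) -
          (Polynomial.C (h ^ j) * q.comp (Polynomial.C h * X)).eval x =
          h ^ j * (1 / h ^ j * fderiv ℝ L (v (x * h)) (γ j) - q.eval (x * h)) := by
        simp only [eval_mul, eval_C, eval_comp, eval_X]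
        rw [mul_comm h x]
        field_simp
      rw [h3, abs_mul, abs_of_pos hjp]
      have h4 : 2 * r - j - 1 + 1 = 2 * r - j := by omega
      rw [h4] at h1
      have h5 : (x * h) ^ (2 * r - j) ≤ h ^ (2 * r - j) :=
        pow_le_pow_left₀ hxh.1 (mul_le_of_le_one_left hh.le hx.2) _
      have h6 : h ^ (2 * r) = h ^ j * h ^ (2 * r - j) := by
        rw [← pow_add]; congr 1; omega
      calc _ ≤ h ^ j * (CT j * (x * h) ^ (2 * r - j)) := mul_le_mul_of_nonneg_left h1 hjp.le
        _ ≤ h ^ j * (CT j * h ^ (2 * r - j)) :=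
          mul_le_mul_of_nonneg_left (mul_le_mul_of_nonneg_left h5 (hCT0 j)) hjp.le
        _ = _ := by rw [h6]; ring
  -- fundamental theorem of calculus
  have hint : ∀ j, Continuous fun x => (p j).eval x * fderiv ℝ L (v (x * h)) (γ j) := fun j =>
    (p j).continuous.mul
      ((hdL.continuous.comp (hvc.comp (by fun_prop))).clm_apply continuous_const)
  have hftc : L (v h) - L (v 0) = h * ∑ j ∈ Finset.range s, η j *
      ∫ x in (0:ℝ)..1, (p j).eval x * fderiv ℝ L (v (x * h)) (γ j) := by
    have h1 := intervalIntegral.integral_eq_sub_of_hasDerivAt (a := 0) (b := 1)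
      (f := fun c => L (v (c * h)))
      (f' := fun x => ∑ j ∈ Finset.range s,
        (h * η j) * ((p j).eval x * fderiv ℝ L (v (x * h)) (γ j))) ?_ ?_
    · simp only [one_mul, zero_mul] at h1
      rw [← h1, intervalIntegral.integral_finsetSum, Finset.mul_sum]
      · refine Finset.sum_congr rfl fun j _ => ?_
        rw [intervalIntegral.integral_const_mul, mul_assoc]
      · intro j _
        exact ((hint j).const_mul _).intervalIntegrable _ _
    · intro x hx
      rw [Set.uIcc_of_le zero_le_one] at hx
      have h1 : HasDerivAt (fun c => v (c * h))
          (h • ∑ j ∈ Finset.range s, (p j).eval x • (η j • γ j)) x := by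
        have := (hv x hx).scomp x ((hasDerivAt_id x).mul_const h)
        simpa [Function.comp_def] using this
      have h2 : HasFDerivAt L (fderiv ℝ L (v (x * h))) (v (x * h)) :=
        (hL.differentiable (by simp)).differentiableAt.hasFDerivAt
      have h3 := h2.comp_hasDerivAt x h1
      have h4 : fderiv ℝ L (v (x * h)) (h • ∑ j ∈ Finset.range s, (p j).eval x • (η j • γ j)) =
          ∑ j ∈ Finset.range s, (h * η j) * ((p j).eval x * fderiv ℝ L (v (x * h)) (γ j)) := by
        rw [map_smul, map_sum, smul_eq_mul, Finset.mul_sum]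
        refine Finset.sum_congr rfl fun j _ => ?_
        rw [map_smul, map_smul, smul_eq_mul, smul_eq_mul]; ring
      rw [h4] at h3
      exact h3
    · exact (continuous_finsetSum _ fun j _ => (hint j).const_mul _).intervalIntegrable _ _
  have hdiff : L (v h) - L (v 0) = h * ∑ j ∈ Finset.range s, η j *
      ((∫ x in (0:ℝ)..1, (p j).eval x * fderiv ℝ L (v (x * h)) (γ j)) -
        ∑ ℓ, bh ℓ * (p j).eval (ch ℓ) * fderiv ℝ L (v (ch ℓ * h)) (γ j)) := by
    simp only [mul_sub, Finset.sum_sub_distrib]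
    rw [hsum, mul_zero, sub_zero]
    exact hftc
  rw [hdiff, abs_mul, abs_of_pos hh]
  have hfin : |∑ j ∈ Finset.range s, η j *
      ((∫ x in (0:ℝ)..1, (p j).eval x * fderiv ℝ L (v (x * h)) (γ j)) -
        ∑ ℓ, bh ℓ * (p j).eval (ch ℓ) * fderiv ℝ L (v (ch ℓ * h)) (γ j))| ≤
      (∑ j ∈ Finset.range s, B * ((1 + ∑ ℓ, |bh ℓ|) * (M j * CT j))) * h ^ (2 * r) := by
    rw [Finset.sum_mul]
    refine (Finset.abs_sum_le_sum_abs _ _).trans (Finset.sum_le_sum fun j hj => ?_)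
    have hj' := Finset.mem_range.1 hj
    rw [abs_mul]
    calc _ ≤ B * ((1 + ∑ ℓ, |bh ℓ|) * (M j * (CT j * h ^ (2 * r)))) :=
          mul_le_mul (hη j hj') (herr j hj') (abs_nonneg _) hB
      _ = _ := by ring
  calc _ ≤ h * ((∑ j ∈ Finset.range s, B * ((1 + ∑ ℓ, |bh ℓ|) * (M j * CT j))) * h ^ (2 * r)) :=
        mul_le_mul_of_nonneg_left hfin hh.le
    _ = _ := by ring

/-- Theorem 4 of the paper, asymptotic part.  With `L : ℝ^d → ℝ^ν` of
class `C^∞`, a quadrature `(ĉ_ℓ, b̂_ℓ)` exact on `Π_{2r-1}`, polynomial maps `u_h ∈ Π_s`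
with range in a fixed compact set, vectors `γ̂_j(h) = O(h^j)`, coefficients `η̂_j(h) = 1`
for `j ≤ s-ν-1` and `η̂_j(h) = 1 - h^{2(s-1-j)} α̂_j(h)` otherwise with `α̂_j(h) = O(h²)`
solving `∑_{j=s-ν}^{s-1} h^{2(s-1-j)} α̂_j(h) φ̂_j(h)ᵀ γ̂_j(h) = ∑_{j<s} φ̂_j(h)ᵀ γ̂_j(h)`,
where `φ̂_j(h) = ∑_ℓ b̂_ℓ P_j(ĉ_ℓ) ∇L(u_h(ĉ_ℓ h))`, and with
`u_h'(ch) = ∑_{j<s} P_j(c) η̂_j(h) γ̂_j(h)` on `[0,1]`, one has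
`L(u_h(h)) - L(u_h(0)) = O(h^{2r+1})` as `h → 0⁺`. -/
theorem stmt15 (m : ℕ) (hm : 1 ≤ m) (s ν r : ℕ) (hν : 1 ≤ ν) (hνs : ν < s) (hr : s ≤ r)
    (L : Fin ν → EuclideanSpace ℝ (Fin (2 * m)) → ℝ) (hL : ∀ i, ContDiff ℝ (⊤ : ℕ∞) (L i))
    (ch bh : Fin r → ℝ) (hch : ∀ ℓ, ch ℓ ∈ Set.Icc (0:ℝ) 1)
    (hquad : ∀ q : Polynomial ℝ, q.natDegree ≤ 2 * r - 1 →
      ∑ ℓ, bh ℓ * q.eval (ch ℓ) = ∫ x in (0:ℝ)..1, q.eval x)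
    (h₀ : ℝ) (hh₀ : 0 < h₀)
    (u : ℝ → ℝ → EuclideanSpace ℝ (Fin (2 * m)))
    (hupoly : ∀ h ∈ Set.Ioc (0:ℝ) h₀,
      ∃ a : Fin (s + 1) → EuclideanSpace ℝ (Fin (2 * m)),
        ∀ t : ℝ, u h t = ∑ i : Fin (s + 1), t ^ (i : ℕ) • a i)
    (K : Set (EuclideanSpace ℝ (Fin (2 * m)))) (hK : IsCompact K)
    (huK : ∀ h ∈ Set.Ioc (0:ℝ) h₀, ∀ t ∈ Set.Icc 0 h, u h t ∈ K)
    (γc : ℕ → ℝ → EuclideanSpace ℝ (Fin (2 * m)))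
    (hγc : ∀ j, j < s → ∃ C > (0:ℝ), ∃ h₁ > (0:ℝ), ∀ h : ℝ, 0 < h → h ≤ h₁ →
      ‖γc j h‖ ≤ C * h ^ j)
    (φ : ℕ → ℝ → Fin ν → EuclideanSpace ℝ (Fin (2 * m)))
    (hφ : ∀ j (h : ℝ) i,
      φ j h i = ∑ ℓ, (bh ℓ * legP j (ch ℓ)) • gradient (L i) (u h (ch ℓ * h)))
    (α : ℕ → ℝ → ℝ)
    (hα : ∀ j, s - ν ≤ j → j ≤ s - 1 →
      ∃ C > (0:ℝ), ∃ h₁ > (0:ℝ), ∀ h : ℝ, 0 < h → h ≤ h₁ → |α j h| ≤ C * h ^ 2)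
    (hαsolve : ∀ h ∈ Set.Ioc (0:ℝ) h₀, ∀ i : Fin ν,
      ∑ j ∈ Finset.Ico (s - ν) s, h ^ (2 * (s - 1 - j)) * α j h * ⟪φ j h i, γc j h⟫ =
      ∑ j ∈ Finset.range s, ⟪φ j h i, γc j h⟫)
    (η : ℕ → ℝ → ℝ)
    (hη₁ : ∀ j, j ≤ s - ν - 1 → ∀ h : ℝ, η j h = 1)
    (hη₂ : ∀ j, s - ν ≤ j → j ≤ s - 1 → ∀ h : ℝ,
      η j h = 1 - h ^ (2 * (s - 1 - j)) * α j h)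
    (hu' : ∀ h ∈ Set.Ioc (0:ℝ) h₀, ∀ cc ∈ Set.Icc (0:ℝ) 1,
      HasDerivAt (u h) (∑ j ∈ Finset.range s, legP j cc • (η j h • γc j h)) (cc * h)) :
    ∃ C > (0:ℝ), ∃ h₁ > (0:ℝ), ∀ h : ℝ, 0 < h → h ≤ min h₀ h₁ →
      ∀ i : Fin ν, |L i (u h h) - L i (u h 0)| ≤ C * h ^ (2 * r + 1) := by
  choose p hp hpe using exists_legPoly
  obtain ⟨Bγ, hBγ, h₁, hh₁, hγb⟩ := unif_bound (fun j h => ‖γc j h‖) (fun j h => h ^ j)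
    (fun j h hh => (pow_pos hh j).le) s hγc
  obtain ⟨Bη, hBη, h₂, hh₂, hηb⟩ := unif_bound (fun j h => |η j h|) (fun _ _ => 1)
    (fun _ _ _ => zero_le_one) s (by
      intro j hj
      by_cases hjs : j ≤ s - ν - 1
      · exact ⟨1, one_pos, 1, one_pos, fun h _ _ => by simp [hη₁ j hjs h]⟩
      · have hj1 : s - ν ≤ j := by omega
        have hj2 : j ≤ s - 1 := by omega
        obtain ⟨C, hC, k, hk, hb⟩ := hα j hj1 hj2
        refine ⟨1 + C, by positivity, min k 1, lt_min hk one_pos, fun h hh hhk => ?_⟩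
        have hh1 : h ≤ 1 := hhk.trans (min_le_right _ _)
        have ha := hb h hh (hhk.trans (min_le_left _ _))
        have hpow : h ^ (2 * (s - 1 - j)) ≤ 1 := pow_le_one₀ hh.le hh1
        have hp0 : 0 ≤ h ^ (2 * (s - 1 - j)) := pow_nonneg hh.le _
        have ha' : |α j h| ≤ C := ha.trans (mul_le_of_le_one_right hC.le (pow_le_one₀ hh.le hh1))
        rw [hη₂ j hj1 hj2 h, mul_one]
        refine (abs_sub _ _).trans ?_
        rw [abs_one, abs_mul, abs_of_nonneg hp0]
        have := mul_le_mul hpow ha' (abs_nonneg _) zero_le_one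
        linarith)
  have hB0 : 0 ≤ max Bγ Bη := hBγ.le.trans (le_max_left _ _)
  choose C hC0 hC using fun i => core s r hr p hp (L i) (hL i) ch bh hch hquad K hK (max Bγ Bη) hB0
  refine ⟨(∑ i, C i) + 1, add_pos_of_nonneg_of_pos (Finset.sum_nonneg fun i _ => hC0 i) one_pos,
    min (min h₁ h₂) 1, lt_min (lt_min hh₁ hh₂) one_pos, fun h hh hle i => ?_⟩
  have hmem : h ∈ Set.Ioc (0:ℝ) h₀ := ⟨hh, hle.trans (min_le_left _ _)⟩
  have hle' := hle.trans (min_le_right _ _)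
  have hle1 : h ≤ h₁ := hle'.trans ((min_le_left _ _).trans (min_le_left _ _))
  have hle2 : h ≤ h₂ := hle'.trans ((min_le_left _ _).trans (min_le_right _ _))
  have hle3 : h ≤ 1 := hle'.trans (min_le_right _ _)
  have hcont : Continuous (u h) := by
    obtain ⟨a, ha⟩ := hupoly h hmem
    have : u h = fun t => ∑ i : Fin (s + 1), t ^ (i : ℕ) • a i := funext ha
    rw [this]
    fun_prop
  have hin : ∀ j, ⟪φ j h i, γc j h⟫ =
      ∑ ℓ, bh ℓ * (p j).eval (ch ℓ) * fderiv ℝ (L i) (u h (ch ℓ * h)) (γc j h) := by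
    intro j
    rw [hφ, sum_inner]
    refine Finset.sum_congr rfl fun ℓ _ => ?_
    rw [real_inner_smul_left, inner_gradient_left, hpe]
  have hzero : ∑ j ∈ Finset.range s, η j h *
      ∑ ℓ, bh ℓ * (p j).eval (ch ℓ) * fderiv ℝ (L i) (u h (ch ℓ * h)) (γc j h) = 0 := by
    simp only [← hin]
    have hs := hαsolve h hmem i
    rw [← Finset.sum_range_add_sum_Ico _ (show s - ν ≤ s by omega)] at hs ⊢
    have e1 : ∑ j ∈ Finset.range (s - ν), η j h * ⟪φ j h i, γc j h⟫ =
        ∑ j ∈ Finset.range (s - ν), ⟪φ j h i, γc j h⟫ := by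
      refine Finset.sum_congr rfl fun j hj => ?_
      have := Finset.mem_range.1 hj
      rw [hη₁ j (by omega), one_mul]
    have e2 : ∑ j ∈ Finset.Ico (s - ν) s, η j h * ⟪φ j h i, γc j h⟫ =
        ∑ j ∈ Finset.Ico (s - ν) s, ⟪φ j h i, γc j h⟫ -
        ∑ j ∈ Finset.Ico (s - ν) s, h ^ (2 * (s - 1 - j)) * α j h * ⟪φ j h i, γc j h⟫ := by
      rw [← Finset.sum_sub_distrib]
      refine Finset.sum_congr rfl fun j hj => ?_
      have := Finset.mem_Ico.1 hj
      rw [hη₂ j this.1 (by omega)]; ring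
    rw [e1, e2, hs]; ring
  have hfin := hC i h hh hle3 (u h) (fun j => γc j h) (fun j => η j h) hcont
    (huK h hmem 0 ⟨le_rfl, hh.le⟩)
    (fun j hj => (hγb h hh hle1 j hj).trans
      (mul_le_mul_of_nonneg_right (le_max_left _ _) (pow_nonneg hh.le _)))
    (fun j hj => (hηb h hh hle2 j hj).trans (by rw [mul_one]; exact le_max_right _ _))
    (fun c hc => by simpa only [hpe] using hu' h hmem c hc) hzero
  refine hfin.trans (mul_le_mul_of_nonneg_right ?_ (pow_nonneg hh.le _))
  have := Finset.single_le_sum (f := C) (fun i _ => hC0 i) (Finset.mem_univ i)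
  linarith
end

section
/- (Symmetry criterion for ELIM/HBVM Butcher matrices, core of Theorem 6 of the paper.) Let k ≥ s ≥ 1, let c₁ < … < c_k in (0,1) and b₁, …, b_k > 0 satisfy the symmetry conditions c_{k+1−i} = 1 − c_i and b_{k+1−i} = b_i for all i, and assume the quadrature (c_ℓ, b_ℓ) is exact for polynomials of degree ≤ s−1 (so that Σ_ℓ b_ℓ P_m(c_ℓ)·1 reproduces ∫₀¹ P_m for m ≤ s−1; in particular Σ_ℓ b_ℓ = 1). Let η₀ = 1 and η₁, …, η_{s−1} ∈ ℝ be arbitrary, and define the k×k matrix A by a_{ij} = b_j · Σ_{m=0}^{s−1} η_m (∫₀^{c_i} P_m(x) dx) P_m(c_j). Then a_{ij} + a_{k+1−i, k+1−j} = b_j for all 1 ≤ i, j ≤ k. -/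
open MeasureTheory Polynomial

theorem legP_reflect (m : ℕ) (x : ℝ) : legP m (1 - x) = (-1) ^ m * legP m x := by
  have h := Polynomial.iterate_derivative_comp_one_sub_X
    ((Polynomial.X ^ 2 - Polynomial.X : Polynomial ℝ) ^ m) m
  have e : ((Polynomial.X ^ 2 - Polynomial.X : Polynomial ℝ) ^ m).comp (1 - Polynomial.X)
      = (Polynomial.X ^ 2 - Polynomial.X : Polynomial ℝ) ^ m := by
    simp only [Polynomial.pow_comp, Polynomial.sub_comp, Polynomial.X_comp]
    ring
  rw [e] at h
  have h2 := congrArg (Polynomial.eval x) h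
  simp only [Polynomial.eval_mul, Polynomial.eval_pow, Polynomial.eval_neg, Polynomial.eval_one,
    Polynomial.eval_comp, Polynomial.eval_sub, Polynomial.eval_X] at h2
  unfold legP
  rw [h2]
  have : ((-1 : ℝ) ^ m) * (-1) ^ m = 1 := by rw [← mul_pow]; simp
  linear_combination (-(Real.sqrt (2 * m + 1) / (Nat.factorial m)) *
    (Polynomial.derivative^[m] ((Polynomial.X ^ 2 - Polynomial.X) ^ m)).eval (1 - x)) * this

theorem legP_cont (m : ℕ) : Continuous (legP m) := by
  unfold legP
  exact continuous_const.mul (Polynomial.continuous _)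

theorem legP_int (m : ℕ) : ∫ x in (0:ℝ)..1, legP (m + 1) x = 0 := by
  unfold legP
  rw [intervalIntegral.integral_const_mul]
  simp only [Function.iterate_succ_apply']
  rw [intervalIntegral.integral_eq_sub_of_hasDerivAt
    (fun x _ => Polynomial.hasDerivAt _ x)
    ((Polynomial.continuous _).intervalIntegrable _ _)]
  have h := Polynomial.pow_sub_dvd_iterate_derivative_pow
    (Polynomial.X ^ 2 - Polynomial.X : Polynomial ℝ) (m + 1) m
  obtain ⟨q, hq⟩ := h
  rw [hq]
  simp

theorem legP_half (m : ℕ) (t : ℝ) : ∫ x in (0:ℝ)..(1 - t), legP m x =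
    (-1) ^ m * ((∫ x in (0:ℝ)..1, legP m x) - ∫ x in (0:ℝ)..t, legP m x) := by
  have h := intervalIntegral.integral_comp_sub_left (a := t) (b := 1) (legP m) 1
  simp only [legP_reflect, intervalIntegral.integral_const_mul, sub_self] at h
  rw [← h, intervalIntegral.integral_interval_sub_left
    ((legP_cont m).intervalIntegrable _ _) ((legP_cont m).intervalIntegrable _ _)]

theorem legP_zero (x : ℝ) : legP 0 x = 1 := by simp [legP]

/-- symmetry criterion for ELIM/HBVM Butcher matrices, core of Theorem 6.
For symmetrically distributed abscissae `c_{k+1-i} = 1 - c_i` with symmetric positive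
weights `b_{k+1-i} = b_i` forming a quadrature exact on `Π_{s-1}`, `η₀ = 1` and arbitrary
`η₁, …, η_{s-1}`, the matrix `a_{ij} = b_j ∑_{m<s} η_m (∫₀^{c_i} P_m) P_m(c_j)` satisfies
`a_{ij} + a_{k+1-i, k+1-j} = b_j` for all `i, j`. -/
theorem stmt17 (k s : ℕ) (hs : 1 ≤ s) (hks : s ≤ k)
    (c b : Fin k → ℝ) (hmono : StrictMono c) (hc : ∀ i, c i ∈ Set.Ioo (0:ℝ) 1)
    (hb : ∀ i, 0 < b i)
    (hsymc : ∀ i, c (Fin.rev i) = 1 - c i)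
    (hsymb : ∀ i, b (Fin.rev i) = b i)
    (hquad : ∀ q : Polynomial ℝ, q.natDegree ≤ s - 1 →
      ∑ ℓ, b ℓ * q.eval (c ℓ) = ∫ x in (0:ℝ)..1, q.eval x)
    (η : ℕ → ℝ) (hη0 : η 0 = 1)
    (A : Matrix (Fin k) (Fin k) ℝ)
    (hA : ∀ i j, A i j = b j * ∑ m ∈ Finset.range s,
      η m * (∫ x in (0:ℝ)..(c i), legP m x) * legP m (c j)) :
    ∀ i j, A i j + A (Fin.rev i) (Fin.rev j) = b j := by
  intro i j
  rw [hA, hA, hsymc, hsymc, hsymb, ← mul_add, ← Finset.sum_add_distrib]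
  have key : ∀ m, η m * (∫ x in (0:ℝ)..(c i), legP m x) * legP m (c j) +
      η m * (∫ x in (0:ℝ)..(1 - c i), legP m x) * legP m (1 - c j) =
      if m = 0 then 1 else 0 := by
    intro m
    have h1 : ((-1 : ℝ) ^ m) * (-1) ^ m = 1 := by rw [← mul_pow]; simp
    rw [legP_half, legP_reflect]
    rcases m with _ | m
    · simp [legP_zero, hη0]
    · rw [legP_int, if_neg (Nat.succ_ne_zero m)]
      linear_combination (-(η (m+1) * (∫ x in (0:ℝ)..(c i), legP (m+1) x) * legP (m+1) (c j))) * h1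
  rw [Finset.sum_congr rfl (fun m _ => key m)]
  have : 0 < s := hs
  simp [this.ne', this]
end
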